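/- Let Ω be a bounded domain in ℂⁿ (n ≥ 2). Suppose there exists a connected open set U ⊆ ℂⁿ with U ∩ ∂Ω ≠ ∅ such that Ω ∩ U is a log-type convex domain. Then for any open set V ⊆ U with closure(V) ⊆ U, there exists a constant K > 0 such that K_Ω(p,q) ≤ K_{Ω∩U}(p,q) ≤ K_Ω(p,q) + K for all p, q ∈ V ∩ Ω. -/

import Mathlib

open Metric Set MeasureTheory Filter Topology

noncomputable section

variable {E : Type*} [NormedAddCommGroup E] [NormedSpace ℂ E]

/-- Distance from `x` to the boundary of `D`. -/
def bdist (D : Set E) (x : E) : ℝ := Metric.infDist x (frontier D)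

/-- Distance from `x` to the boundary of `D` along the complex line `x + ℂ v`. -/
def bdistDir (D : Set E) (x v : E) : ℝ :=
  Metric.infDist x (frontier D ∩ {w | ∃ c : ℂ, w = x + c • v})

/-- The infinitesimal Kobayashi (pseudo-)metric of `D ⊆ E`. -/
def kobMetric (D : Set E) (x v : E) : ℝ :=
  sInf { r : ℝ | ∃ (f : ℂ → E) (ξ : ℂ),
    DifferentiableOn ℂ f (ball (0:ℂ) 1) ∧ MapsTo f (ball (0:ℂ) 1) D ∧
    f 0 = x ∧ ξ • derivWithin f (ball (0:ℂ) 1) 0 = v ∧ r = ‖ξ‖ }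

/-- `σ` is absolutely continuous on `[a,b]`, with a.e. derivative `g`. -/
def IsACWithDeriv (σ g : ℝ → E) (a b : ℝ) : Prop :=
  IntervalIntegrable g volume a b ∧
  ∀ t ∈ Icc a b, σ t = σ a + ∫ s in a..t, g s

/-- The Kobayashi pseudo-distance of `D`, defined via lengths of absolutely
continuous curves (Venturini's description). -/
def kobDist (D : Set E) (x y : E) : ℝ :=
  sInf { r : ℝ | ∃ (a b : ℝ) (σ g : ℝ → E), a ≤ b ∧
    IsACWithDeriv σ g a b ∧ MapsTo σ (Icc a b) D ∧ σ a = x ∧ σ b = y ∧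
    r = ∫ t in a..b, kobMetric D (σ t) (g t) }

/-- Log-type convex domain, with explicit constants `C, ν > 0`. -/
def LogTypeConvexWith (D : Set E) (C ν : ℝ) : Prop :=
  IsOpen D ∧ D.Nonempty ∧ Bornology.IsBounded D ∧ Convex ℝ D ∧ 0 < C ∧ 0 < ν ∧
  ∀ z ∈ D, ∀ v : E, v ≠ 0 →
    bdistDir D z v ≤ C / |Real.log (bdist D z)| ^ (1 + ν)

/-- Log-type convex domain. -/
def LogTypeConvex (D : Set E) : Prop := ∃ C ν : ℝ, LogTypeConvexWith D C ν

/-- A `ℂ`-convex set: every nonempty intersection with a complex affine line is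
connected and simply connected. -/
def CConvex (D : Set E) : Prop :=
  ∀ z v : E, v ≠ 0 → (D ∩ {w | ∃ c : ℂ, w = z + c • v}).Nonempty →
    IsConnected (D ∩ {w | ∃ c : ℂ, w = z + c • v}) ∧
    SimplyConnectedSpace ↥(D ∩ {w | ∃ c : ℂ, w = z + c • v})

/-- Log-type `ℂ`-convex domain. -/
def LogTypeCConvex (D : Set E) : Prop :=
  IsOpen D ∧ D.Nonempty ∧ Bornology.IsBounded D ∧ CConvex D ∧
  ∃ C ν : ℝ, 0 < C ∧ 0 < ν ∧
    ∀ z ∈ D, ∀ v : E, v ≠ 0 →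
      bdistDir D z v ≤ C / |Real.log (bdist D z)| ^ (1 + ν)

/-- `σ : [a,b] → D` (with a.e. derivative `g`) is a `(λ,κ)`-almost geodesic for the
Kobayashi distance of `D`. -/
def AlmostGeodesicOn (D : Set E) (lam kap : ℝ) (σ g : ℝ → E) (a b : ℝ) : Prop :=
  MapsTo σ (Icc a b) D ∧ IsACWithDeriv σ g a b ∧
  (∀ s ∈ Icc a b, ∀ t ∈ Icc a b,
    (1 / lam) * |t - s| - kap ≤ kobDist D (σ s) (σ t) ∧
    kobDist D (σ s) (σ t) ≤ lam * |t - s| + kap) ∧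
  (∀ᵐ t ∂volume, t ∈ Icc a b → kobMetric D (σ t) (g t) ≤ lam)

/-- `σ : [a,b] → D` is a `C`-rough geodesic for the Kobayashi distance of `D`. -/
def RoughGeodesicOn (D : Set E) (C : ℝ) (σ : ℝ → E) (a b : ℝ) : Prop :=
  MapsTo σ (Icc a b) D ∧
  ∀ s ∈ Icc a b, ∀ t ∈ Icc a b,
    |t - s| - C ≤ kobDist D (σ s) (σ t) ∧ kobDist D (σ s) (σ t) ≤ |t - s| + C

/-- `ρ` is a `C¹` local defining function for `D` near `ξ` on the open set `W`. -/
def IsLocalDefiningFn (D : Set E) (ξ : E) (W : Set E) (ρ : E → ℝ) : Prop :=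
  IsOpen W ∧ ξ ∈ W ∧ ContDiffOn ℝ 1 ρ W ∧ (∀ x ∈ W, fderiv ℝ ρ x ≠ 0) ∧
  D ∩ W = {x ∈ W | ρ x < 0} ∧ frontier D ∩ W = {x ∈ W | ρ x = 0}

/-- `ξ` is a Dini-smooth boundary point of `D`: the boundary is `C¹` near `ξ` and the
unit normal admits a modulus of continuity `ω` satisfying the Dini condition. -/
def DiniSmoothBoundaryPoint (D : Set E) (ξ : E) : Prop :=
  ∃ (W : Set E) (ρ : E → ℝ) (ω : ℝ → ℝ),
    IsLocalDefiningFn D ξ W ρ ∧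
    (∀ t ∈ Icc (0:ℝ) 1, 0 ≤ ω t) ∧ MonotoneOn ω (Icc (0:ℝ) 1) ∧
    IntegrableOn (fun t => ω t / t) (Ioc (0:ℝ) 1) ∧
    ∀ x ∈ frontier D ∩ W, ∀ y ∈ frontier D ∩ W, ‖x - y‖ ≤ 1 →
      ‖(‖fderiv ℝ ρ x‖)⁻¹ • fderiv ℝ ρ x - (‖fderiv ℝ ρ y‖)⁻¹ • fderiv ℝ ρ y‖ ≤ ω ‖x - y‖

/-- `D` has `C^{1,ε}` boundary: near every boundary point there is a `C¹` defining
function whose differential is `ε`-Hölder. -/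
def HolderC1Boundary (D : Set E) (ε : ℝ) : Prop :=
  ∀ ξ ∈ frontier D, ∃ (W : Set E) (ρ : E → ℝ) (M : ℝ), 0 < M ∧
    IsLocalDefiningFn D ξ W ρ ∧
    ∀ x ∈ W, ∀ y ∈ W, ‖fderiv ℝ ρ x - fderiv ℝ ρ y‖ ≤ M * ‖x - y‖ ^ ε

/-- The complex affine tangent hyperplane of `∂D` at `x`, computed from a local
defining function `ρ`. -/
def complexTangentHyperplane (ρ : E → ℝ) (x : E) : Set E :=
  {w : E | fderiv ℝ ρ x (w - x) = 0 ∧ fderiv ℝ ρ x ((Complex.I : ℂ) • (w - x)) = 0}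

/-- The Gromov product of `x` and `y` with respect to the base point `o`, for the
Kobayashi distance of `D`. -/
def gromovProd (D : Set E) (o x y : E) : ℝ :=
  (kobDist D x o + kobDist D o y - kobDist D x y) / 2

end

/-!
A near-geodesic is a curve whose Kobayashi length exceeds the distance of its end points by a
bounded amount. On `Ω ∩ U` write `L` for the positive part of `-log δ`. Convexity bounds the
Kobayashi distance to a base point `o` by `A + B L`, and the log-type condition bounds the Kobayashi
metric at `v` from below by a multiple of `L ^ (1 + ν) ‖v‖`. Near-geodesics of `Ω` are therefore
visible: if one of them moves by at least `r` inside `Ω ∩ U`, away from `∂U`, it meets a fixed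
Kobayashi ball around `o`, because otherwise its Euclidean length is bounded by an integral of
`(|s| + m) ^ (-(1 + ν))` over the arc length `s`, which is small for large `m`.

Consequently a point `z` well inside `U` has Kobayashi distance at least `K_Ω(z, o) - const` to
`Ω \ U`, and restricting analytic discs (Royden's localization) bounds the ratio of the two
infinitesimal metrics by `1 + C exp (-K_Ω(z, o))`. The error is integrable along near-geodesics that
stay in `U`. A near-geodesic that leaves `U` meets the ball around `o` before its first exit and
after its last return, and inside `Ω ∩ U` the part in between is replaced by a path through `o`.
-/

section KobayashiMetric

variable {E : Type*} [NormedAddCommGroup E] [NormedSpace ℂ E] {D D' : Set E} {x v : E} {f : ℂ → E}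

/-- `f` is an analytic disc in `D` centred at `x`: a competitor in the definition of `kobMetric`.
As the values of `f` outside the unit disc are irrelevant, `f` is total. -/
structure IsAnalyticDisc (D : Set E) (x : E) (f : ℂ → E) : Prop where
  differentiableOn : DifferentiableOn ℂ f (ball 0 1)
  mapsTo : MapsTo f (ball 0 1) D
  map_zero : f 0 = x

lemma norm_add_mul_lt_one {c ρ w : ℂ} (hc : ‖c‖ < 1) (hρ : ‖c‖ + ‖ρ‖ ≤ 1) (hw : ‖w‖ < 1) :
    ‖c + ρ * w‖ < 1 := by
  have hle := norm_add_le c (ρ * w)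
  rw [norm_mul] at hle
  nlinarith [norm_nonneg w]

namespace IsAnalyticDisc

lemma mono (hf : IsAnalyticDisc D x f) (hDD' : D ⊆ D') : IsAnalyticDisc D' x f :=
  ⟨hf.differentiableOn, hf.mapsTo.mono_right hDD', hf.map_zero⟩

lemma hasDerivAt (hf : IsAnalyticDisc D x f) {c : ℂ} (hc : ‖c‖ < 1) :
    HasDerivAt f (deriv f c) c :=
  (hf.differentiableOn.differentiableAt (isOpen_ball.mem_nhds (by simpa using hc))).hasDerivAt

lemma hasDerivAt_comp_affine (hf : IsAnalyticDisc D x f) {c : ℂ} (hc : ‖c‖ < 1) (ρ : ℂ) :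
    HasDerivAt (fun w ↦ f (c + ρ * w)) (ρ • deriv f c) 0 := by
  have haff : HasDerivAt (fun w ↦ c + ρ * w) ρ 0 := by
    simpa using ((hasDerivAt_id (0 : ℂ)).const_mul ρ).const_add c
  have hf' : HasDerivAt f (deriv f c) (c + ρ * 0) := by simpa using hf.hasDerivAt hc
  exact hf'.scomp 0 haff

lemma comp_affine (hf : IsAnalyticDisc D x f) {c ρ : ℂ} (hc : ‖c‖ < 1) (hρ : ‖c‖ + ‖ρ‖ ≤ 1)
    (hD : ∀ w, ‖w‖ < 1 → f (c + ρ * w) ∈ D') :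
    IsAnalyticDisc D' (f c) (fun w ↦ f (c + ρ * w)) where
  differentiableOn := by
    refine hf.differentiableOn.comp (by fun_prop) fun w hw ↦ ?_
    rw [mem_ball_zero_iff] at hw ⊢
    exact norm_add_mul_lt_one hc hρ hw
  mapsTo w hw := hD w (mem_ball_zero_iff.1 hw)
  map_zero := by simp

end IsAnalyticDisc

lemma exists_isAnalyticDisc_of_ball_subset {ρ : ℝ} (hρ : 0 < ρ) (hball : ball x ρ ⊆ D) (v : E) :
    ∃ (f : ℂ → E) (ξ : ℂ), IsAnalyticDisc D x f ∧ ξ • deriv f 0 = v ∧ ‖ξ‖ = ‖v‖ / ρ := by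
  set u : E := ((ρ / ‖v‖ : ℝ) : ℂ) • v
  have hu : ‖u‖ ≤ ρ := by
    rcases eq_or_ne v 0 with rfl | hv
    · simpa [u] using hρ.le
    · simp [u, norm_smul, abs_of_pos hρ, hv]
  have huv : ((‖v‖ / ρ : ℝ) : ℂ) • u = v := by
    rcases eq_or_ne v 0 with rfl | hv
    · simp
    · rw [smul_smul, ← Complex.ofReal_mul, div_mul_div_cancel₀ hρ.ne',
        div_self (norm_ne_zero_iff.2 hv), Complex.ofReal_one, one_smul]
  have hderiv : HasDerivAt (fun w : ℂ ↦ x + w • u) u 0 := by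
    simpa using ((hasDerivAt_id (0 : ℂ)).smul_const u).const_add x
  have hmaps : MapsTo (fun w : ℂ ↦ x + w • u) (ball 0 1) D := fun w hw ↦ hball <| by
    rw [mem_ball_zero_iff] at hw
    rw [mem_ball_iff_norm, add_sub_cancel_left, norm_smul]
    nlinarith [norm_nonneg w]
  exact ⟨_, (‖v‖ / ρ : ℝ), ⟨by fun_prop, hmaps, by simp⟩, by rw [hderiv.deriv, huv],
    by simp [abs_of_pos hρ]⟩

lemma kobMetric_eq_sInf_image (D : Set E) (x v : E) :
    kobMetric D x v = sInf (norm '' {ξ : ℂ | ∃ f, IsAnalyticDisc D x f ∧ ξ • deriv f 0 = v}) := by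
  have hderiv (f : ℂ → E) : derivWithin f (ball 0 1) 0 = deriv f 0 :=
    derivWithin_of_isOpen isOpen_ball (by simp)
  rw [kobMetric]
  congr 1
  ext r
  simp only [hderiv, mem_ofPred_eq, mem_image]
  constructor
  · rintro ⟨f, ξ, hf, hmaps, h0, hξ, rfl⟩
    exact ⟨ξ, ⟨f, ⟨hf, hmaps, h0⟩, hξ⟩, rfl⟩
  · rintro ⟨ξ, ⟨f, hf, hξ⟩, rfl⟩
    exact ⟨f, ξ, hf.differentiableOn, hf.mapsTo, hf.map_zero, hξ, rfl⟩

lemma kobMetric_nonneg (D : Set E) (x v : E) : 0 ≤ kobMetric D x v := by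
  rw [kobMetric_eq_sInf_image]
  exact Real.sInf_nonneg (by rintro _ ⟨ξ, -, rfl⟩; exact norm_nonneg ξ)

lemma IsAnalyticDisc.kobMetric_le (hf : IsAnalyticDisc D x f) (ξ : ℂ) :
    kobMetric D x (ξ • deriv f 0) ≤ ‖ξ‖ := by
  rw [kobMetric_eq_sInf_image]
  exact csInf_le ⟨0, by rintro _ ⟨η, -, rfl⟩; exact norm_nonneg η⟩ ⟨ξ, ⟨f, hf, rfl⟩, rfl⟩

lemma IsAnalyticDisc.kobMetric_le_of_hasDerivAt (hf : IsAnalyticDisc D x f) {ξ : ℂ} {f' : E}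
    (hf' : HasDerivAt f f' 0) (hv : ξ • f' = v) : kobMetric D x v ≤ ‖ξ‖ := by
  rw [← hv, ← hf'.deriv]
  exact hf.kobMetric_le ξ

lemma kobMetric_le_norm_div {ρ : ℝ} (hρ : 0 < ρ) (hball : ball x ρ ⊆ D) (v : E) :
    kobMetric D x v ≤ ‖v‖ / ρ := by
  obtain ⟨f, ξ, hf, rfl, hξ⟩ := exists_isAnalyticDisc_of_ball_subset hρ hball v
  exact hξ ▸ hf.kobMetric_le ξ

lemma le_kobMetric (hD : IsOpen D) (hx : x ∈ D) {r : ℝ}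
    (h : ∀ (f : ℂ → E) (ξ : ℂ), IsAnalyticDisc D x f → ξ • deriv f 0 = v → r ≤ ‖ξ‖) :
    r ≤ kobMetric D x v := by
  obtain ⟨ρ, hρ, hball⟩ := Metric.isOpen_iff.1 hD x hx
  obtain ⟨f, ξ, hf, hξ, -⟩ := exists_isAnalyticDisc_of_ball_subset hρ hball v
  rw [kobMetric_eq_sInf_image]
  refine le_csInf ⟨_, ξ, ⟨f, hf, hξ⟩, rfl⟩ ?_
  rintro _ ⟨ξ, ⟨f, hf, hξ⟩, rfl⟩
  exact h f ξ hf hξ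

lemma exists_isAnalyticDisc_of_kobMetric_lt (hD : IsOpen D) (hx : x ∈ D) {c : ℝ}
    (hc : kobMetric D x v < c) :
    ∃ (f : ℂ → E) (ξ : ℂ), IsAnalyticDisc D x f ∧ ξ • deriv f 0 = v ∧ ‖ξ‖ < c := by
  contrapose! hc
  exact le_kobMetric hD hx hc

lemma kobMetric_mono (hD : IsOpen D) (hDD' : D ⊆ D') (hx : x ∈ D) (v : E) :
    kobMetric D' x v ≤ kobMetric D x v := by
  refine le_kobMetric hD hx fun f ξ hf hξ ↦ ?_
  exact hξ ▸ (hf.mono hDD').kobMetric_le ξ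

lemma kobMetric_neg (D : Set E) (x v : E) : kobMetric D x (-v) = kobMetric D x v := by
  have himage (ξ : ℂ) (f : ℂ → E) : ξ • deriv f 0 = -v ↔ -ξ • deriv f 0 = v := by
    rw [neg_smul, neg_eq_iff_eq_neg]
  simp only [kobMetric_eq_sInf_image, himage]
  congr 1
  ext r
  simp only [mem_image, mem_ofPred_eq]
  exact (Equiv.neg ℂ).exists_congr fun ξ ↦ by simp

lemma kobMetric_le_inv_mul (hD' : IsOpen D') (hx : x ∈ D') {s : ℝ} (hs : 0 < s) (hs1 : s ≤ 1)
    (h : ∀ f, IsAnalyticDisc D' x f → ∀ w, ‖w‖ < s → f w ∈ D) (v : E) :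
    kobMetric D x v ≤ s⁻¹ * kobMetric D' x v := by
  rw [le_inv_mul_iff₀ hs]
  refine le_kobMetric hD' hx fun f ξ hf hξ ↦ ?_
  have hdisc : IsAnalyticDisc D x fun w ↦ f (0 + (s : ℂ) * w) := by
    refine hf.map_zero ▸ hf.comp_affine (by simp) (by simpa [abs_of_pos hs]) fun w hw ↦ h f hf _ ?_
    rw [zero_add, norm_mul, Complex.norm_real, Real.norm_of_nonneg hs.le]
    nlinarith
  have hle := hdisc.kobMetric_le_of_hasDerivAt (ξ := ξ / s) (v := v)
    (hf.hasDerivAt_comp_affine (by simp) _)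
    (by rw [smul_smul, div_mul_cancel₀ _ (by exact_mod_cast hs.ne'), hξ])
  rwa [norm_div, Complex.norm_real, Real.norm_of_nonneg hs.le, le_div_iff₀' hs] at hle

lemma IsAnalyticDisc.kobMetric_deriv_le (hf : IsAnalyticDisc D x f) {c : ℂ} (hc : ‖c‖ < 1) (η : ℂ) :
    kobMetric D (f c) (η • deriv f c) ≤ ‖η‖ / (1 - ‖c‖) := by
  have hpos : 0 < 1 - ‖c‖ := sub_pos.2 hc
  have hnorm : ‖((1 - ‖c‖ : ℝ) : ℂ)‖ = 1 - ‖c‖ := by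
    rw [Complex.norm_real, Real.norm_of_nonneg hpos.le]
  have hρ : ‖c‖ + ‖((1 - ‖c‖ : ℝ) : ℂ)‖ ≤ 1 := by rw [hnorm]; linarith
  have hdisc : IsAnalyticDisc D (f c) fun w ↦ f (c + ((1 - ‖c‖ : ℝ) : ℂ) * w) :=
    hf.comp_affine hc hρ fun w hw ↦
      hf.mapsTo (mem_ball_zero_iff.2 (norm_add_mul_lt_one hc hρ hw))
  have hle := hdisc.kobMetric_le_of_hasDerivAt (ξ := η / (1 - ‖c‖ : ℝ)) (v := η • deriv f c)
    (hf.hasDerivAt_comp_affine hc _)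
    (by rw [smul_smul, div_mul_cancel₀ _ (by exact_mod_cast hpos.ne')])
  rwa [norm_div, hnorm] at hle

lemma exists_thickening_image_subset_of_kobMetric_lt (hD : IsOpen D) (hx : x ∈ D) {c : ℝ}
    (hc : kobMetric D x v < c) :
    ∃ (f : ℂ → E) (c' ε : ℝ), 0 < c' ∧ c' < c ∧ 0 < ε ∧ IsAnalyticDisc D x f ∧
      (c' : ℂ) • deriv f 0 = v ∧ thickening ε (f '' ball 0 1) ⊆ D := by
  obtain ⟨f, ξ, hf, hξ, hξc⟩ := exists_isAnalyticDisc_of_kobMetric_lt hD hx hc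
  obtain ⟨c', hξc', hc'c⟩ := exists_between hξc
  have hc'0 : 0 < c' := (norm_nonneg ξ).trans_lt hξc'
  set ρ : ℂ := ξ / c'
  have hρ : ‖ρ‖ < 1 := by
    rwa [norm_div, Complex.norm_real, Real.norm_of_nonneg hc'0.le, div_lt_one hc'0]
  have hball : closedBall (0 : ℂ) ‖ρ‖ ⊆ ball 0 1 := closedBall_subset_ball hρ
  obtain ⟨ε, hε, hthick⟩ := ((isCompact_closedBall (0 : ℂ) ‖ρ‖).image_of_continuousOn
    (hf.differentiableOn.continuousOn.mono hball)).exists_thickening_subset_open hD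
    (image_subset_iff.2 (hf.mapsTo.mono_left hball))
  have hmem (w : ℂ) (hw : ‖w‖ < 1) : f (0 + ρ * w) ∈ f '' closedBall 0 ‖ρ‖ := by
    refine mem_image_of_mem f ?_
    rw [zero_add, mem_closedBall_zero_iff, norm_mul]
    exact mul_le_of_le_one_right (norm_nonneg ρ) hw.le
  refine ⟨fun w ↦ f (0 + ρ * w), c', ε, hc'0, hc'c, hε, ?_, ?_, ?_⟩
  · exact hf.map_zero ▸ hf.comp_affine (by simp) (by simpa using hρ.le)
      fun w hw ↦ hthick (self_subset_thickening hε _ (hmem w hw))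
  · rw [(hf.hasDerivAt_comp_affine (by simp) ρ).deriv, smul_smul,
      mul_div_cancel₀ _ (by exact_mod_cast hc'0.ne'), hξ]
  · refine (thickening_subset_of_subset ε ?_).trans hthick
    rintro _ ⟨w, hw, rfl⟩
    exact hmem w (mem_ball_zero_iff.1 hw)

lemma IsAnalyticDisc.add_affine (hf : IsAnalyticDisc D x f) {ε : ℝ}
    (hε : thickening ε (f '' ball 0 1) ⊆ D) {a u : E} (hau : ‖a‖ + ‖u‖ < ε) :
    IsAnalyticDisc D (x + a) (fun w ↦ f w + (a + w • u)) where
  differentiableOn := hf.differentiableOn.add (by fun_prop)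
  mapsTo w hw := by
    refine hε (mem_thickening_iff.2 ⟨f w, mem_image_of_mem f hw, ?_⟩)
    have hle : ‖w • u‖ ≤ ‖u‖ := by
      rw [norm_smul]
      exact mul_le_of_le_one_left (norm_nonneg u) (mem_ball_zero_iff.1 hw).le
    rw [dist_eq_norm, add_sub_cancel_left]
    linarith [norm_add_le a (w • u)]
  map_zero := by simp [hf.map_zero]

lemma isOpen_setOf_kobMetric_lt (hD : IsOpen D) (c : ℝ) :
    IsOpen {p : E × E | p.1 ∈ D ∧ kobMetric D p.1 p.2 < c} := by
  rw [isOpen_iff_mem_nhds]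
  rintro ⟨x, v⟩ ⟨hx, hlt⟩
  obtain ⟨f, c', ε, hc'0, hc'c, hε, hf, rfl, hthick⟩ :=
    exists_thickening_image_subset_of_kobMetric_lt hD hx hlt
  have hc' : (c' : ℂ) ≠ 0 := by exact_mod_cast hc'0.ne'
  set u : E × E → E := fun p ↦ (c' : ℂ)⁻¹ • p.2 - deriv f 0
  have hcont : ContinuousAt (fun p : E × E ↦ ‖p.1 - x‖ + ‖u p‖) (x, (c' : ℂ) • deriv f 0) := by
    fun_prop
  have hnear : ∀ᶠ p in 𝓝 (x, (c' : ℂ) • deriv f 0), ‖p.1 - x‖ + ‖u p‖ < ε :=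
    hcont.eventually_lt continuousAt_const
      (by simpa only [u, inv_smul_smul₀ hc', sub_self, norm_zero, add_zero] using hε)
  filter_upwards [hnear, hD.preimage continuous_fst |>.mem_nhds hx] with p hp hpD
  have hdisc : IsAnalyticDisc D p.1 fun w ↦ f w + (p.1 - x + w • u p) := by
    simpa using hf.add_affine hthick hp
  have hderiv : HasDerivAt (fun w ↦ f w + (p.1 - x + w • u p)) (deriv f 0 + u p) 0 := by
    have haff := ((hasDerivAt_id (0 : ℂ)).smul_const (u p)).const_add (p.1 - x)
    rw [one_smul] at haff
    exact (hf.hasDerivAt (by simp)).add haff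
  have hle := hdisc.kobMetric_le_of_hasDerivAt (ξ := c') (v := p.2) hderiv (by
    rw [add_sub_cancel, smul_smul, mul_inv_cancel₀ hc', one_smul])
  rw [Complex.norm_real, Real.norm_of_nonneg hc'0.le] at hle
  exact ⟨hpD, hle.trans_lt hc'c⟩

lemma measurable_indicator_kobMetric [MeasurableSpace (E × E)] [BorelSpace (E × E)]
    (hD : IsOpen D) :
    Measurable ((Prod.fst ⁻¹' D).indicator fun p : E × E ↦ kobMetric D p.1 p.2) := by
  have hDo : IsOpen (Prod.fst ⁻¹' D : Set (E × E)) := hD.preimage continuous_fst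
  refine measurable_of_Iio fun c ↦ ?_
  have hlt := (isOpen_setOf_kobMetric_lt hD c).measurableSet
  rcases le_or_gt c 0 with hc | hc
  · convert MeasurableSet.empty
    refine eq_empty_of_forall_notMem fun p hp ↦ (hc.trans ?_).not_gt hp
    exact indicator_nonneg (fun p _ ↦ kobMetric_nonneg D p.1 p.2) p
  · convert hlt.union hDo.measurableSet.compl
    ext p
    by_cases hp : p.1 ∈ D <;> simp [hp, hc]

lemma intervalIntegrable_kobMetric (hD : IsOpen D) {σ g : ℝ → E} {a b : ℝ} (hab : a ≤ b)
    (hσ : ContinuousOn σ (Icc a b)) (hmaps : MapsTo σ (Icc a b) D)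
    (hg : IntervalIntegrable g volume a b) :
    IntervalIntegrable (fun t ↦ kobMetric D (σ t) (g t)) volume a b := by
  rw [intervalIntegrable_iff_integrableOn_Icc_of_le hab] at hg ⊢
  obtain ⟨ε, hε, hthick⟩ := (isCompact_Icc.image_of_continuousOn hσ).exists_thickening_subset_open
    hD (image_subset_iff.2 hmaps)
  have hmeas : AEStronglyMeasurable (fun t ↦ kobMetric D (σ t) (g t))
      (volume.restrict (Icc a b)) := by
    borelize (E × E)
    have hpair : AEMeasurable (fun t ↦ (σ t, g t)) (volume.restrict (Icc a b)) :=
      ((hσ.aestronglyMeasurable measurableSet_Icc).prodMk hg.aestronglyMeasurable).aemeasurable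
    refine (((measurable_indicator_kobMetric hD).comp_aemeasurable hpair).congr ?_)
      |>.aestronglyMeasurable
    filter_upwards [ae_restrict_mem measurableSet_Icc] with t ht
    exact indicator_of_mem (s := Prod.fst ⁻¹' D) (a := (σ t, g t)) (hmaps ht) _
  refine Integrable.mono' (hg.norm.div_const ε) hmeas ?_
  filter_upwards [ae_restrict_mem measurableSet_Icc] with t ht
  rw [Real.norm_of_nonneg (kobMetric_nonneg _ _ _)]
  exact kobMetric_le_norm_div hε
    ((ball_subset_thickening (mem_image_of_mem _ ht) ε).trans hthick) _

end KobayashiMetric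
section KobayashiDistance

variable {E : Type*} [NormedAddCommGroup E] [NormedSpace ℂ E] {D D' : Set E} {x y z : E}
  {σ σ' g g' : ℝ → E} {a b c d r r' : ℝ}

/-- `σ : [a, b] → D` is an absolutely continuous curve with a.e. derivative `g`: a competitor in
the definition of `kobDist`. -/
structure IsACCurve (D : Set E) (σ g : ℝ → E) (a b : ℝ) : Prop where
  le : a ≤ b
  isACWithDeriv : IsACWithDeriv σ g a b
  mapsTo : MapsTo σ (Icc a b) D

/-- The Kobayashi length in `D` of the curve `σ` with derivative `g` on `[a, b]`. -/
noncomputable def kobLength (D : Set E) (σ g : ℝ → E) (a b : ℝ) : ℝ :=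
  ∫ t in a..b, kobMetric D (σ t) (g t)

lemma kobLength_nonneg (D : Set E) (σ g : ℝ → E) (hab : a ≤ b) : 0 ≤ kobLength D σ g a b :=
  intervalIntegral.integral_nonneg hab fun _ _ ↦ kobMetric_nonneg _ _ _

lemma kobLength_congr (D : Set E) (hab : a ≤ b) (hσ : EqOn σ' σ (Ioo a b))
    (hg : EqOn g' g (Ioo a b)) : kobLength D σ' g' a b = kobLength D σ g a b :=
  intervalIntegral.integral_congr_Ioo_of_le hab fun t ht ↦ by simp only [hσ ht, hg ht]

lemma kobLength_comp_neg (D : Set E) (σ g : ℝ → E) (a b : ℝ) :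
    kobLength D (fun t ↦ σ (-t)) (fun t ↦ -g (-t)) (-b) (-a) = kobLength D σ g a b := by
  simp only [kobLength, kobMetric_neg]
  rw [intervalIntegral.integral_comp_neg fun t ↦ kobMetric D (σ t) (g t), neg_neg, neg_neg]

lemma kobLength_comp_sub_right (D : Set E) (σ g : ℝ → E) (a b c : ℝ) :
    kobLength D (fun t ↦ σ (t - c)) (fun t ↦ g (t - c)) (a + c) (b + c) = kobLength D σ g a b := by
  rw [kobLength, intervalIntegral.integral_comp_sub_right fun t ↦ kobMetric D (σ t) (g t),
    add_sub_cancel_right, add_sub_cancel_right, kobLength]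

namespace IsACCurve

lemma left_mem (h : IsACCurve D σ g a b) : σ a ∈ D := h.mapsTo (left_mem_Icc.2 h.le)

lemma right_mem (h : IsACCurve D σ g a b) : σ b ∈ D := h.mapsTo (right_mem_Icc.2 h.le)

lemma intervalIntegrable_deriv (h : IsACCurve D σ g a b) (hc : c ∈ Icc a b) (hd : d ∈ Icc a b) :
    IntervalIntegrable g volume c d :=
  h.isACWithDeriv.1.mono_set (by rw [uIcc_of_le h.le]; exact uIcc_subset_Icc hc hd)

lemma eq_add_integral (h : IsACCurve D σ g a b) (hc : c ∈ Icc a b) (hd : d ∈ Icc a b) :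
    σ d = σ c + ∫ t in c..d, g t := by
  have ha := left_mem_Icc.2 h.le
  rw [h.isACWithDeriv.2 d hd, h.isACWithDeriv.2 c hc, add_assoc,
    intervalIntegral.integral_add_adjacent_intervals (h.intervalIntegrable_deriv ha hc)
      (h.intervalIntegrable_deriv hc hd)]

lemma continuousOn (h : IsACCurve D σ g a b) : ContinuousOn σ (Icc a b) := by
  have hcont := intervalIntegral.continuousOn_primitive_interval' h.isACWithDeriv.1 left_mem_uIcc
  rw [uIcc_of_le h.le] at hcont
  exact (hcont.const_add (σ a)).congr h.isACWithDeriv.2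

lemma intervalIntegrable_kobMetric (hD : IsOpen D) (h : IsACCurve D σ g a b) :
    IntervalIntegrable (fun t ↦ kobMetric D (σ t) (g t)) volume a b :=
  _root_.intervalIntegrable_kobMetric hD h.le h.continuousOn h.mapsTo h.isACWithDeriv.1

lemma restrict (h : IsACCurve D σ g a b) (hc : a ≤ c) (hcd : c ≤ d) (hd : d ≤ b) :
    IsACCurve D σ g c d where
  le := hcd
  isACWithDeriv := by
    have hc' : c ∈ Icc a b := ⟨hc, hcd.trans hd⟩
    exact ⟨h.intervalIntegrable_deriv hc' ⟨hc.trans hcd, hd⟩,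
      fun t ht ↦ h.eq_add_integral hc' ⟨hc.trans ht.1, ht.2.trans hd⟩⟩
  mapsTo := h.mapsTo.mono_left (Icc_subset_Icc hc hd)

lemma of_mapsTo (h : IsACCurve D σ g a b) (hD' : MapsTo σ (Icc a b) D') :
    IsACCurve D' σ g a b :=
  ⟨h.le, h.isACWithDeriv, hD'⟩

lemma congr (h : IsACCurve D σ g a b) (hσ : EqOn σ' σ (Icc a b)) (hg : EqOn g' g (Ioo a b)) :
    IsACCurve D σ' g' a b where
  le := h.le
  isACWithDeriv := by
    refine ⟨h.isACWithDeriv.1.congr_uIoo (by rw [uIoo_of_le h.le]; exact hg.symm),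
      fun t ht ↦ ?_⟩
    rw [hσ ht, hσ (left_mem_Icc.2 h.le), h.isACWithDeriv.2 t ht]
    congr 1
    exact intervalIntegral.integral_congr_Ioo_of_le ht.1 fun s hs ↦
      (hg ⟨hs.1, hs.2.trans_le ht.2⟩).symm
  mapsTo := h.mapsTo.congr hσ.symm

lemma trans (h : IsACCurve D σ g a b) (h' : IsACCurve D σ g b c) : IsACCurve D σ g a c where
  le := h.le.trans h'.le
  isACWithDeriv := by
    refine ⟨h.isACWithDeriv.1.trans h'.isACWithDeriv.1, fun t ht ↦ ?_⟩
    rcases le_total t b with htb | htb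
    · exact h.isACWithDeriv.2 t ⟨ht.1, htb⟩
    · have htc : t ∈ Icc b c := ⟨htb, ht.2⟩
      rw [h'.isACWithDeriv.2 t htc, h.isACWithDeriv.2 b (right_mem_Icc.2 h.le), add_assoc,
        intervalIntegral.integral_add_adjacent_intervals h.isACWithDeriv.1
          (h'.intervalIntegrable_deriv (left_mem_Icc.2 h'.le) htc)]
  mapsTo := Icc_union_Icc_eq_Icc h.le h'.le ▸ h.mapsTo.union h'.mapsTo

lemma comp_neg (h : IsACCurve D σ g a b) :
    IsACCurve D (fun t ↦ σ (-t)) (fun t ↦ -g (-t)) (-b) (-a) where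
  le := neg_le_neg h.le
  isACWithDeriv := by
    refine ⟨((IntervalIntegrable.iff_comp_neg (by simp)).1 h.isACWithDeriv.1).symm.neg,
      fun t ht ↦ ?_⟩
    rw [intervalIntegral.integral_neg, intervalIntegral.integral_comp_neg, neg_neg,
      ← intervalIntegral.integral_symm]
    simp only [neg_neg]
    exact h.eq_add_integral (right_mem_Icc.2 h.le) ⟨le_neg.1 ht.2, neg_le.1 ht.1⟩
  mapsTo t ht := h.mapsTo ⟨le_neg.1 ht.2, neg_le.1 ht.1⟩

lemma comp_sub_right (h : IsACCurve D σ g a b) (c : ℝ) :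
    IsACCurve D (fun t ↦ σ (t - c)) (fun t ↦ g (t - c)) (a + c) (b + c) where
  le := add_le_add_left h.le c
  isACWithDeriv := by
    refine ⟨h.isACWithDeriv.1.comp_sub_right c, fun t ht ↦ ?_⟩
    rw [intervalIntegral.integral_comp_sub_right]
    simp only [add_sub_cancel_right]
    exact h.isACWithDeriv.2 _ ⟨le_sub_iff_add_le.2 ht.1, sub_le_iff_le_add.2 ht.2⟩
  mapsTo t ht := h.mapsTo ⟨le_sub_iff_add_le.2 ht.1, sub_le_iff_le_add.2 ht.2⟩

lemma kobLength_add (hD : IsOpen D) (h : IsACCurve D σ g a b) (h' : IsACCurve D σ g b c) :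
    kobLength D σ g a b + kobLength D σ g b c = kobLength D σ g a c :=
  intervalIntegral.integral_add_adjacent_intervals (h.intervalIntegrable_kobMetric hD)
    (h'.intervalIntegrable_kobMetric hD)

lemma kobLength_anti (hD : IsOpen D) (hD' : IsOpen D') (hDD' : D ⊆ D')
    (h : IsACCurve D σ g a b) : kobLength D' σ g a b ≤ kobLength D σ g a b :=
  intervalIntegral.integral_mono_on h.le
    ((h.of_mapsTo (h.mapsTo.mono_right hDD')).intervalIntegrable_kobMetric hD')
    (h.intervalIntegrable_kobMetric hD) fun _ ht ↦ kobMetric_mono hD hDD' (h.mapsTo ht) _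

end IsACCurve

lemma isACCurve_segment [CompleteSpace E] (h : segment ℝ x y ⊆ D) :
    IsACCurve D (fun t ↦ x + t • (y - x)) (fun _ ↦ y - x) 0 1 where
  le := zero_le_one
  isACWithDeriv := ⟨intervalIntegrable_const, fun t _ ↦ by simp [smul_sub]⟩
  mapsTo t ht := h (by rw [segment_eq_image']; exact ⟨t, ht, rfl⟩)

/-- Some absolutely continuous curve in `D` from `x` to `y` has Kobayashi length `r`. -/
def JoinedWithLength (D : Set E) (x y : E) (r : ℝ) : Prop :=
  ∃ (σ g : ℝ → E) (a b : ℝ), IsACCurve D σ g a b ∧ σ a = x ∧ σ b = y ∧ kobLength D σ g a b = r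

lemma IsACCurve.joinedWithLength (h : IsACCurve D σ g a b) :
    JoinedWithLength D (σ a) (σ b) (kobLength D σ g a b) :=
  ⟨σ, g, a, b, h, rfl, rfl, rfl⟩

namespace JoinedWithLength

lemma nonneg (h : JoinedWithLength D x y r) : 0 ≤ r := by
  obtain ⟨σ, g, a, b, hσ, -, -, rfl⟩ := h
  exact kobLength_nonneg D σ g hσ.le

lemma symm (h : JoinedWithLength D x y r) : JoinedWithLength D y x r := by
  obtain ⟨σ, g, a, b, hσ, rfl, rfl, rfl⟩ := h
  exact ⟨_, _, _, _, hσ.comp_neg, by simp, by simp, kobLength_comp_neg D σ g a b⟩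

lemma trans (hD : IsOpen D) (h : JoinedWithLength D x y r) (h' : JoinedWithLength D y z r') :
    JoinedWithLength D x z (r + r') := by
  classical
  obtain ⟨σ, g, a, b, hσ, rfl, rfl, rfl⟩ := h
  obtain ⟨σ', g', a', b', hσ', hb, rfl, rfl⟩ := h'
  set τ : ℝ → E := fun t ↦ σ' (t - (b - a'))
  set h : ℝ → E := fun t ↦ g' (t - (b - a'))
  have hτ : IsACCurve D τ h b (b' + (b - a')) := by
    simpa using hσ'.comp_sub_right (b - a')
  have hτb : τ b = σ b := by simp [τ, hb]
  set S : ℝ → E := (Iic b).piecewise σ τ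
  set G : ℝ → E := (Iic b).piecewise g h
  have hS₁ : EqOn S σ (Icc a b) := (piecewise_eqOn _ _ _).mono Icc_subset_Iic_self
  have hG₁ : EqOn G g (Ioo a b) := (piecewise_eqOn _ _ _).mono fun t ht ↦ ht.2.le
  have hS₂ : EqOn S τ (Icc b (b' + (b - a'))) := fun t ht ↦ by
    rcases ht.1.eq_or_lt with rfl | hlt
    · exact (piecewise_eq_of_mem _ _ _ self_mem_Iic).trans hτb.symm
    · exact piecewise_eq_of_notMem _ _ _ (notMem_Iic.2 hlt)
  have hG₂ : EqOn G h (Ioo b (b' + (b - a'))) := fun t ht ↦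
    piecewise_eq_of_notMem _ _ _ (notMem_Iic.2 ht.1)
  have hS := hσ.congr hS₁ hG₁
  have hS' := hτ.congr hS₂ hG₂
  refine ⟨S, G, a, b' + (b - a'), hS.trans hS', hS₁ (left_mem_Icc.2 hσ.le),
    (hS₂ (right_mem_Icc.2 hτ.le)).trans (by simp [τ]), ?_⟩
  rw [← hS.kobLength_add hD hS', kobLength_congr D hσ.le (hS₁.mono Ioo_subset_Icc_self) hG₁,
    kobLength_congr D hτ.le (hS₂.mono Ioo_subset_Icc_self) hG₂,
    ← kobLength_comp_sub_right D σ' g' a' b' (b - a'), add_sub_cancel]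

end JoinedWithLength

lemma exists_joinedWithLength [CompleteSpace E] (hD : IsOpen D) (hDc : IsPreconnected D)
    (hx : x ∈ D) (hy : y ∈ D) : ∃ r, JoinedWithLength D x y r := by
  refine hDc.induction₂ (fun x y ↦ ∃ r, JoinedWithLength D x y r) (fun z hz ↦ ?_)
    (fun u v w _ _ _ ⟨r, hr⟩ ⟨r', hr'⟩ ↦ ⟨_, hr.trans hD hr'⟩)
    (fun u v _ _ ⟨r, hr⟩ ↦ ⟨r, hr.symm⟩) hx hy
  obtain ⟨ρ, hρ, hball⟩ := Metric.isOpen_iff.1 hD z hz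
  filter_upwards [mem_nhdsWithin_of_mem_nhds (ball_mem_nhds z hρ)] with w hw
  have hseg : segment ℝ z w ⊆ D :=
    ((convex_ball z ρ).segment_subset (mem_ball_self hρ) hw).trans hball
  exact ⟨_, by simpa using (isACCurve_segment hseg).joinedWithLength⟩

lemma kobDist_eq_sInf (D : Set E) (x y : E) :
    kobDist D x y = sInf {r | JoinedWithLength D x y r} := by
  rw [kobDist]
  congr 1
  ext r
  constructor
  · rintro ⟨a, b, σ, g, hab, hσ, hm, hx, hy, rfl⟩
    exact ⟨σ, g, a, b, ⟨hab, hσ, hm⟩, hx, hy, rfl⟩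
  · rintro ⟨σ, g, a, b, hσ, hx, hy, rfl⟩
    exact ⟨a, b, σ, g, hσ.le, hσ.isACWithDeriv, hσ.mapsTo, hx, hy, rfl⟩

lemma kobDist_nonneg (D : Set E) (x y : E) : 0 ≤ kobDist D x y := by
  rw [kobDist_eq_sInf]
  exact Real.sInf_nonneg fun _ hr ↦ hr.nonneg

lemma JoinedWithLength.kobDist_le (h : JoinedWithLength D x y r) : kobDist D x y ≤ r := by
  rw [kobDist_eq_sInf]
  exact csInf_le ⟨0, fun _ hr ↦ hr.nonneg⟩ h

lemma IsACCurve.kobDist_le (h : IsACCurve D σ g a b) :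
    kobDist D (σ a) (σ b) ≤ kobLength D σ g a b :=
  h.joinedWithLength.kobDist_le

lemma kobDist_comm (D : Set E) (x y : E) : kobDist D x y = kobDist D y x := by
  simp only [kobDist_eq_sInf]
  congr 1
  exact Set.ext fun r ↦ ⟨JoinedWithLength.symm, JoinedWithLength.symm⟩

lemma le_kobDist [CompleteSpace E] (hD : IsOpen D) (hDc : IsPreconnected D) (hx : x ∈ D)
    (hy : y ∈ D) (h : ∀ s, JoinedWithLength D x y s → r ≤ s) : r ≤ kobDist D x y := by
  rw [kobDist_eq_sInf]
  exact le_csInf (exists_joinedWithLength hD hDc hx hy) h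

lemma exists_joinedWithLength_lt [CompleteSpace E] (hD : IsOpen D) (hDc : IsPreconnected D)
    (hx : x ∈ D) (hy : y ∈ D) {ε : ℝ} (hε : 0 < ε) :
    ∃ r, JoinedWithLength D x y r ∧ r < kobDist D x y + ε := by
  by_contra! h
  exact (le_kobDist hD hDc hx hy h).not_gt (lt_add_of_pos_right _ hε)

lemma kobDist_triangle [CompleteSpace E] (hD : IsOpen D) (hDc : IsPreconnected D) (hx : x ∈ D)
    (hy : y ∈ D) (hz : z ∈ D) : kobDist D x z ≤ kobDist D x y + kobDist D y z := by
  refine le_of_forall_pos_le_add fun ε hε ↦ ?_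
  obtain ⟨r, hr, hrε⟩ := exists_joinedWithLength_lt hD hDc hx hy (half_pos hε)
  obtain ⟨r', hr', hrε'⟩ := exists_joinedWithLength_lt hD hDc hy hz (half_pos hε)
  linarith [(hr.trans hD hr').kobDist_le]

lemma kobDist_anti [CompleteSpace E] (hD : IsOpen D) (hDc : IsPreconnected D) (hD' : IsOpen D')
    (hDD' : D ⊆ D') (hx : x ∈ D) (hy : y ∈ D) : kobDist D' x y ≤ kobDist D x y := by
  refine le_kobDist hD hDc hx hy ?_
  rintro _ ⟨σ, g, a, b, hσ, rfl, rfl, rfl⟩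
  exact (hσ.of_mapsTo (hσ.mapsTo.mono_right hDD')).kobDist_le.trans
    (hσ.kobLength_anti hD hD' hDD')

/-- A curve whose Kobayashi length exceeds the distance of its end points by at most `κ`. -/
structure IsNearGeodesic (D : Set E) (κ : ℝ) (σ g : ℝ → E) (a b : ℝ) : Prop
    extends IsACCurve D σ g a b where
  kobLength_le : kobLength D σ g a b ≤ kobDist D (σ a) (σ b) + κ

lemma exists_isNearGeodesic [CompleteSpace E] (hD : IsOpen D) (hDc : IsPreconnected D) (hx : x ∈ D)
    (hy : y ∈ D) {κ : ℝ} (hκ : 0 < κ) :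
    ∃ (σ g : ℝ → E) (a b : ℝ), IsNearGeodesic D κ σ g a b ∧ σ a = x ∧ σ b = y := by
  obtain ⟨_, ⟨σ, g, a, b, hσ, rfl, rfl, rfl⟩, hlt⟩ := exists_joinedWithLength_lt hD hDc hx hy hκ
  exact ⟨σ, g, a, b, ⟨hσ, hlt.le⟩, rfl, rfl⟩

lemma IsNearGeodesic.restrict [CompleteSpace E] (hD : IsOpen D) (hDc : IsPreconnected D) {κ : ℝ}
    (h : IsNearGeodesic D κ σ g a b) (hc : a ≤ c) (hcd : c ≤ d) (hd : d ≤ b) :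
    IsNearGeodesic D κ σ g c d where
  toIsACCurve := h.toIsACCurve.restrict hc hcd hd
  kobLength_le := by
    have hac := h.toIsACCurve.restrict le_rfl hc (hcd.trans hd)
    have hcd' := h.toIsACCurve.restrict hc hcd hd
    have hdb := h.toIsACCurve.restrict (hc.trans hcd) hd le_rfl
    have hadd := (hac.trans hcd').kobLength_add hD hdb
    rw [← hac.kobLength_add hD hcd'] at hadd
    linarith [h.kobLength_le, hac.kobDist_le, hdb.kobDist_le,
      kobDist_triangle hD hDc hac.left_mem hac.right_mem hdb.right_mem,
      kobDist_triangle hD hDc hcd'.left_mem hcd'.right_mem hdb.right_mem]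

end KobayashiDistance

section ChangeOfVariables

lemma absolutelyContinuousOnInterval_comp_lipschitzOnWith {X Y : Type*} [PseudoMetricSpace X]
    [PseudoMetricSpace Y] {S : ℝ → X} {Φ : X → Y} {c d : ℝ} {K : NNReal} {s : Set X}
    (hΦ : LipschitzOnWith K Φ s) (hS : AbsolutelyContinuousOnInterval S c d)
    (hmaps : MapsTo S (uIcc c d) s) : AbsolutelyContinuousOnInterval (Φ ∘ S) c d := by
  have hlim := Tendsto.const_mul (K : ℝ) hS
  rw [mul_zero] at hlim
  refine squeeze_zero' (.of_forall fun I ↦ Finset.sum_nonneg fun _ _ ↦ dist_nonneg) ?_ hlim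
  filter_upwards [mem_inf_of_right (mem_principal_self _)] with I hI
  rw [Finset.mul_sum]
  exact Finset.sum_le_sum fun i hi ↦
    hΦ.dist_le_mul _ (hmaps (hI.1 i hi).1) _ (hmaps (hI.1 i hi).2)

-- Stated for merely integrable `k`, which the change of variables lemmas in Mathlib do not cover.
lemma integral_comp_primitive_mul {φ k : ℝ → ℝ} {c d t₀ : ℝ} (hφ : Continuous φ)
    (hk : IntervalIntegrable k volume c d) (ht₀ : t₀ ∈ uIcc c d) :
    ∫ t in c..d, φ (∫ s in t₀..t, k s) * k t =
      ∫ u in (∫ s in t₀..c, k s)..(∫ s in t₀..d, k s), φ u := by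
  set S : ℝ → ℝ := fun t ↦ ∫ s in t₀..t, k s
  set Φ : ℝ → ℝ := fun x ↦ ∫ u in (0 : ℝ)..x, φ u
  have hΦ x : HasDerivAt Φ (φ x) x := (hφ.integral_hasStrictDerivAt 0 x).hasDerivAt
  have hS : AbsolutelyContinuousOnInterval S c d :=
    hk.absolutelyContinuousOnInterval_intervalIntegral ht₀
  have hΦ1 : ContDiff ℝ 1 Φ := contDiff_one_iff_deriv.2
    ⟨fun x ↦ (hΦ x).differentiableAt, by rwa [funext fun x ↦ (hΦ x).deriv]⟩
  obtain ⟨K, hK⟩ := hΦ1.locallyLipschitz.locallyLipschitzOn.exists_lipschitzOnWith_of_compact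
    (isCompact_uIcc.image_of_continuousOn hS.continuousOn)
  have hderiv : ∫ t in c..d, deriv (Φ ∘ S) t = ∫ t in c..d, φ (S t) * k t := by
    refine intervalIntegral.integral_congr_ae ?_
    filter_upwards [hk.ae_hasDerivAt_integral] with t ht htm
    exact ((hΦ (S t)).comp t (ht (uIoc_subset_uIcc htm) t₀ ht₀)).deriv
  rw [← hderiv, (absolutelyContinuousOnInterval_comp_lipschitzOnWith hK hS
    (mapsTo_image S _)).integral_deriv_eq_sub]
  exact intervalIntegral.integral_interval_sub_left (hφ.intervalIntegrable _ _)
    (hφ.intervalIntegrable _ _)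

lemma intervalIntegrable_comp_primitive_mul {φ k : ℝ → ℝ} {c d t₀ : ℝ} (hφ : Continuous φ)
    (hk : IntervalIntegrable k volume c d) (ht₀ : t₀ ∈ uIcc c d) :
    IntervalIntegrable (fun t ↦ φ (∫ s in t₀..t, k s) * k t) volume c d :=
  hk.continuousOn_mul
    (hφ.comp_continuousOn (intervalIntegral.continuousOn_primitive_interval' hk ht₀))

lemma integral_comp_primitive_mul_le {φ k : ℝ → ℝ} {c d t₀ : ℝ} (hφ : Continuous φ)
    (hφi : Integrable φ) (hφ0 : ∀ u, 0 ≤ φ u) (hk : IntervalIntegrable k volume c d)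
    (ht₀ : t₀ ∈ uIcc c d) :
    ∫ t in c..d, φ (∫ s in t₀..t, k s) * k t ≤ ∫ u, φ u := by
  rw [integral_comp_primitive_mul hφ hk ht₀]
  calc _ ≤ ∫ u in uIoc (∫ s in t₀..c, k s) (∫ s in t₀..d, k s), ‖φ u‖ :=
        (Real.le_norm_self _).trans intervalIntegral.norm_integral_le_integral_norm_uIoc
    _ ≤ ∫ u, ‖φ u‖ := setIntegral_le_integral hφi.norm (.of_forall fun _ ↦ norm_nonneg _)
    _ = ∫ u, φ u := by simp only [Real.norm_of_nonneg (hφ0 _)]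

lemma integral_abs_add_rpow {m ν : ℝ} (hm : 0 < m) (hν : 0 < ν) :
    ∫ u : ℝ, (|u| + m) ^ (-(1 + ν)) = 2 * (m ^ (-ν) / ν) := by
  have hshift := (measurePreserving_add_right volume m).setIntegral_preimage_emb
    (measurableEmbedding_addRight m) (fun u : ℝ ↦ u ^ (-(1 + ν))) (Ioi m)
  rw [preimage_add_const_Ioi, sub_self, integral_Ioi_rpow_of_lt (by linarith) hm] at hshift
  rw [integral_comp_abs (f := fun u ↦ (u + m) ^ (-(1 + ν))), hshift,
    show -(1 + ν) + 1 = -ν by ring, neg_div_neg_eq]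

lemma integral_exp_neg_abs_div_two : ∫ u : ℝ, Real.exp (-(|u| / 2)) = 4 := by
  have h := integral_exp_mul_Ioi (a := -(1 / 2)) (by norm_num) 0
  rw [integral_comp_abs (f := fun u ↦ Real.exp (-(u / 2)))]
  convert congrArg (2 * ·) h using 3
  · ring_nf
  · norm_num

lemma integral_abs_primitive_add_rpow_mul_le {k : ℝ → ℝ} {c d t₀ m ν : ℝ}
    (hk : IntervalIntegrable k volume c d) (ht₀ : t₀ ∈ uIcc c d) (hm : 0 < m) (hν : 0 < ν) :
    ∫ t in c..d, (|∫ s in t₀..t, k s| + m) ^ (-(1 + ν)) * k t ≤ 2 * (m ^ (-ν) / ν) := by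
  rw [← integral_abs_add_rpow hm hν]
  have hcont : Continuous fun u : ℝ ↦ (|u| + m) ^ (-(1 + ν)) :=
    (by fun_prop : Continuous fun u : ℝ ↦ |u| + m).rpow_const fun u ↦ .inl (by positivity)
  -- The integral is nonzero, so it is not the junk value of a nonintegrable function.
  refine integral_comp_primitive_mul_le hcont (.of_integral_ne_zero ?_)
    (fun u ↦ by positivity) hk ht₀
  rw [integral_abs_add_rpow hm hν]
  positivity

lemma integral_exp_neg_abs_primitive_mul_le {k : ℝ → ℝ} {c d t₀ : ℝ}
    (hk : IntervalIntegrable k volume c d) (ht₀ : t₀ ∈ uIcc c d) :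
    ∫ t in c..d, Real.exp (-(|∫ s in t₀..t, k s| / 2)) * k t ≤ 4 := by
  rw [← integral_exp_neg_abs_div_two]
  refine integral_comp_primitive_mul_le (φ := fun u ↦ Real.exp (-(|u| / 2))) (by fun_prop)
    (.of_integral_ne_zero ?_) (fun u ↦ by positivity) hk ht₀
  simp [integral_exp_neg_abs_div_two]

end ChangeOfVariables

section BoundaryDistance

variable {E : Type*} [NormedAddCommGroup E] [NormedSpace ℂ E] {D : Set E} {z v : E}

lemma subset_of_isPreconnected_of_disjoint_frontier {X : Type*} [TopologicalSpace X] {D T : Set X}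
    (hT : IsPreconnected T) (hTD : (T ∩ D).Nonempty) (hfr : Disjoint T (frontier D)) : T ⊆ D := by
  refine (hT.subset_left_of_subset_union isOpen_interior isClosed_closure.isOpen_compl
    (disjoint_compl_right.mono_left interior_subset_closure) (fun x hx ↦ ?_) ?_).trans
    interior_subset
  · by_cases hcl : x ∈ closure D
    · exact .inl (by_contra fun hint ↦ hfr.le_bot ⟨hx, hcl, hint⟩)
    · exact .inr hcl
  · obtain ⟨x, hxT, hxD⟩ := hTD
    exact ⟨x, hxT, by_contra fun hint ↦ hfr.le_bot ⟨hxT, subset_closure hxD, hint⟩⟩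

lemma ball_bdist_subset (hz : z ∈ D) : ball z (bdist D z) ⊆ D := by
  rcases (ball z (bdist D z)).eq_empty_or_nonempty with hempty | hne
  · simp [hempty]
  · exact subset_of_isPreconnected_of_disjoint_frontier (convex_ball z _).isPreconnected
      ⟨z, mem_ball_self (nonempty_ball.1 hne), hz⟩ disjoint_ball_infDist

lemma bdist_pos [Nontrivial E] (hD : IsOpen D) (hDb : Bornology.IsBounded D) (hz : z ∈ D) :
    0 < bdist D z := by
  have huniv : D ≠ univ := by
    rintro rfl
    exact NormedSpace.unbounded_univ ℂ E hDb
  refine (isClosed_frontier.notMem_iff_infDist_pos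
    (nonempty_frontier_iff.2 ⟨⟨z, hz⟩, huniv⟩)).1 fun hfr ↦ ?_
  exact hD.inter_frontier_eq.le ⟨hz, hfr⟩

lemma frontier_inter_complexLine_nonempty (hDb : Bornology.IsBounded D) (hz : z ∈ D)
    (hv : v ≠ 0) : (frontier D ∩ {w | ∃ c : ℂ, w = z + c • v}).Nonempty := by
  by_contra hempty
  have hline : (range fun c : ℂ ↦ z + c • v) ⊆ D := by
    refine subset_of_isPreconnected_of_disjoint_frontier (isPreconnected_range (by fun_prop))
      ⟨z, ⟨0, by simp⟩, hz⟩ (disjoint_left.2 ?_)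
    rintro _ ⟨c, rfl⟩ hfr
    exact hempty ⟨_, hfr, c, rfl⟩
  obtain ⟨R, hR0, hR⟩ := hDb.subset_closedBall_lt 0 z
  have hv' : 0 < ‖v‖ := norm_pos_iff.2 hv
  have hfar := hR (hline ⟨((R + 1) / ‖v‖ : ℝ), rfl⟩)
  rw [mem_closedBall, dist_self_add_left, norm_smul, Complex.norm_real,
    Real.norm_of_nonneg (by positivity), div_mul_cancel₀ _ hv'.ne'] at hfar
  linarith

end BoundaryDistance

section Comparison

variable {E : Type*} [NormedAddCommGroup E] [NormedSpace ℂ E] {D : Set E} {x z o v : E}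

lemma IsACCurve.kobDist_le_sub (hD : IsOpen D) {σ g : ℝ → E} {a b : ℝ}
    (h : IsACCurve D σ g a b) {F F' : ℝ → ℝ} (hF : ∀ t ∈ Icc a b, HasDerivAt F (F' t) t)
    (hle : ∀ t ∈ Icc a b, kobMetric D (σ t) (g t) ≤ F' t) :
    kobDist D (σ a) (σ b) ≤ F b - F a :=
  h.kobDist_le.trans <| intervalIntegral.integral_le_sub_of_hasDeriv_right_of_le h.le
    (fun t ht ↦ (hF t ht).continuousAt.continuousWithinAt)
    (fun t ht ↦ (hF t (Ioo_subset_Icc_self ht)).hasDerivWithinAt)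
    ((intervalIntegrable_iff_integrableOn_Icc_of_le h.le).1 (h.intervalIntegrable_kobMetric hD))
    fun t ht ↦ hle t (Ioo_subset_Icc_self ht)

lemma isACCurve_of_hasDerivAt [CompleteSpace E] {σ g : ℝ → E} {a b : ℝ} (hab : a ≤ b)
    (hσ : ∀ t ∈ Icc a b, HasDerivAt σ (g t) t) (hg : ContinuousOn g (Icc a b))
    (hmaps : MapsTo σ (Icc a b) D) : IsACCurve D σ g a b where
  le := hab
  isACWithDeriv := by
    have hint : ∀ t ∈ Icc a b, IntervalIntegrable g volume a t := fun t ht ↦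
      (hg.mono (by rw [uIcc_of_le ht.1]; exact Icc_subset_Icc_right ht.2)).intervalIntegrable
    refine ⟨hint b (right_mem_Icc.2 hab), fun t ht ↦ ?_⟩
    rw [intervalIntegral.integral_eq_sub_of_hasDerivAt (fun s hs ↦ hσ s ?_) (hint t ht),
      add_sub_cancel]
    rw [uIcc_of_le ht.1] at hs
    exact Icc_subset_Icc_right ht.2 hs
  mapsTo := hmaps

lemma IsAnalyticDisc.kobDist_le [CompleteSpace E] (hD : IsOpen D) {f : ℂ → E}
    (hf : IsAnalyticDisc D x f) {ζ : ℂ} (hζ : ‖ζ‖ < 1) :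
    kobDist D x (f ζ) ≤ -Real.log (1 - ‖ζ‖) := by
  have hnorm : ∀ t ∈ Icc (0 : ℝ) 1, ‖(t : ℂ) * ζ‖ = t * ‖ζ‖ := fun t ht ↦ by
    rw [norm_mul, Complex.norm_real, Real.norm_of_nonneg ht.1]
  have hlt : ∀ t ∈ Icc (0 : ℝ) 1, ‖(t : ℂ) * ζ‖ < 1 := fun t ht ↦ by
    rw [hnorm t ht]
    exact (mul_le_of_le_one_left (norm_nonneg ζ) ht.2).trans_lt hζ
  have hcurve : IsACCurve D (fun t : ℝ ↦ f (t * ζ)) (fun t ↦ ζ • deriv f (t * ζ)) 0 1 := by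
    refine isACCurve_of_hasDerivAt zero_le_one (fun t ht ↦ ?_) ?_
      fun t ht ↦ hf.mapsTo (mem_ball_zero_iff.2 (hlt t ht))
    · have hray : HasDerivAt (fun s : ℝ ↦ (s : ℂ) * ζ) ζ t := by
        simpa using (Complex.ofRealCLM.hasDerivAt (x := t)).mul_const ζ
      exact (hf.hasDerivAt (hlt t ht)).scomp t hray
    · exact ((hf.differentiableOn.deriv isOpen_ball).continuousOn.comp (by fun_prop)
        fun t ht ↦ mem_ball_zero_iff.2 (hlt t ht)).const_smul ζ
  have hF : ∀ t ∈ Icc (0 : ℝ) 1,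
      HasDerivAt (fun t ↦ -Real.log (1 - t * ‖ζ‖)) (‖ζ‖ / (1 - ‖(t : ℂ) * ζ‖)) t := fun t ht ↦ by
    have hlin : HasDerivAt (fun t : ℝ ↦ 1 - t * ‖ζ‖) (-‖ζ‖) t := by
      simpa using ((hasDerivAt_id t).mul_const ‖ζ‖).const_sub 1
    have hpos : 1 - t * ‖ζ‖ ≠ 0 := by
      rw [← hnorm t ht]
      exact (sub_pos.2 (hlt t ht)).ne'
    rw [hnorm t ht]
    exact (hlin.log hpos).neg.congr_deriv (by ring)
  simpa [hf.map_zero] using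
    hcurve.kobDist_le_sub hD hF fun t ht ↦ hf.kobMetric_deriv_le (hlt t ht) ζ

lemma norm_deriv_zero_le_of_re_le {h : ℂ → ℂ} {M : ℝ} (hM : 0 < M)
    (hh : DifferentiableOn ℂ h (ball 0 1)) (hre : MapsTo h (ball 0 1) {w | w.re ≤ M})
    (h0 : h 0 = 0) : ‖deriv h 0‖ ≤ 4 * M := by
  have hmaps : MapsTo h (ball 0 (1 / 2)) (closedBall (h 0) (2 * M)) := fun w hw ↦ by
    rw [mem_ball_zero_iff] at hw
    rw [h0, mem_closedBall_zero_iff]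
    refine (Complex.borelCaratheodory_zero hM hh hre one_pos
      (mem_ball_zero_iff.2 (by linarith)) h0).trans ?_
    rw [div_le_iff₀ (by linarith)]
    nlinarith
  refine (Complex.norm_deriv_le_div_of_mapsTo_ball
    (hh.mono (ball_subset_ball (by norm_num))) hmaps (by norm_num)).trans_eq ?_
  ring

-- A functional separating `z + c • v` from `D` maps analytic discs in `D` into a half-plane, so the
-- Borel–Carathéodory theorem bounds their derivative at the centre.
lemma one_le_four_mul_norm_mul_kobMetric (hD : IsOpen D) (hDc : Convex ℝ D) (hz : z ∈ D) {c : ℂ}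
    (hc : z + c • v ∉ D) : 1 ≤ 4 * ‖c‖ * kobMetric D z v := by
  have hc0 : 0 < ‖c‖ := norm_pos_iff.2 fun h ↦ hc (by simpa [h])
  obtain ⟨l, hl⟩ := RCLike.geometric_hahn_banach_open_point (𝕜 := ℂ) hDc hD hc
  have hl' : ∀ w ∈ D, (l w - l z).re < (l (c • v)).re := fun w hw ↦ by
    have := hl w hw
    simp only [map_add, RCLike.re_to_complex] at this
    linarith [Complex.sub_re (l w) (l z)]
  have hM : 0 < (l (c • v)).re := by simpa using hl' z hz
  rw [← div_le_iff₀' (by positivity)]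
  refine le_kobMetric hD hz fun f ξ hf hξ ↦ ?_
  have hderiv : HasDerivAt (fun w ↦ l (f w) - l z) (l (deriv f 0)) 0 :=
    (l.hasFDerivAt.comp_hasDerivAt (0 : ℂ) (hf.hasDerivAt (by simp))).sub_const _
  have hbound := norm_deriv_zero_le_of_re_le (h := fun w ↦ l (f w) - l z) hM
    ((l.differentiable.comp_differentiableOn hf.differentiableOn).sub_const _)
    (fun w hw ↦ (hl' _ (hf.mapsTo hw)).le) (by simp [hf.map_zero])
  rw [hderiv.deriv] at hbound
  have hle : (l (c • v)).re ≤ 4 * ‖c‖ * ‖ξ‖ * (l (c • v)).re :=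
    calc (l (c • v)).re ≤ ‖l (c • v)‖ := Complex.re_le_norm _
      _ = ‖c‖ * (‖ξ‖ * ‖l (deriv f 0)‖) := by rw [← hξ]; simp only [map_smul, norm_smul]
      _ ≤ ‖c‖ * (‖ξ‖ * (4 * (l (c • v)).re)) := by gcongr
      _ = 4 * ‖c‖ * ‖ξ‖ * (l (c • v)).re := by ring
  rw [div_le_iff₀' (by positivity)]
  exact le_of_mul_le_mul_right (by rwa [one_mul]) hM

lemma norm_le_four_mul_bdistDir_mul_kobMetric (hD : IsOpen D) (hDc : Convex ℝ D)
    (hDb : Bornology.IsBounded D) (hz : z ∈ D) (v : E) :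
    ‖v‖ ≤ 4 * bdistDir D z v * kobMetric D z v := by
  rcases eq_or_ne v 0 with rfl | hv
  · rw [norm_zero]
    have h0 := kobMetric_nonneg D z 0
    have h0' : 0 ≤ bdistDir D z 0 := infDist_nonneg
    positivity
  have hone : ∀ c : ℂ, z + c • v ∈ frontier D → 1 ≤ 4 * ‖c‖ * kobMetric D z v := fun c hc ↦
    one_le_four_mul_norm_mul_kobMetric hD hDc hz
      fun hcD ↦ hD.inter_frontier_eq.le ⟨hcD, hc⟩
  have hne := frontier_inter_complexLine_nonempty hDb hz hv
  have hk : 0 < kobMetric D z v := by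
    obtain ⟨_, hfr, c, rfl⟩ := hne
    exact pos_of_mul_pos_right (one_pos.trans_le (hone c hfr)) (by positivity)
  have hdist : ‖v‖ / (4 * kobMetric D z v) ≤ bdistDir D z v := by
    refine (le_infDist hne).2 ?_
    rintro _ ⟨hfr, c, rfl⟩
    rw [div_le_iff₀ (by positivity), dist_self_add_right, norm_smul]
    nlinarith [hone c hfr, norm_nonneg v]
  rw [div_le_iff₀ (by positivity)] at hdist
  linarith

open scoped Pointwise in
lemma ball_subset_of_convex {y : E} {δ₁ δ₂ t : ℝ} (hDc : Convex ℝ D) (hδ₁ : 0 < δ₁) (hδ₂ : 0 < δ₂)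
    (hx : ball x δ₁ ⊆ D) (hy : ball y δ₂ ⊆ D) (ht : t ∈ Icc (0 : ℝ) 1) :
    ball ((1 - t) • x + t • y) ((1 - t) * δ₁ + t * δ₂) ⊆ D := by
  rcases ht.1.eq_or_lt with rfl | ht0
  · simpa using hx
  rcases ht.2.eq_or_lt with rfl | ht1
  · simpa using hy
  have ht1' : 0 < 1 - t := sub_pos.2 ht1
  calc ball ((1 - t) • x + t • y) ((1 - t) * δ₁ + t * δ₂)
      = (1 - t) • ball x δ₁ + t • ball y δ₂ := by
        rw [_root_.smul_ball ht1'.ne', _root_.smul_ball ht0.ne', Real.norm_of_nonneg ht1'.le,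
          Real.norm_of_nonneg ht0.le, ball_add_ball (by positivity) (by positivity)]
    _ ⊆ (1 - t) • D + t • D := add_subset_add (smul_set_mono hx) (smul_set_mono hy)
    _ ⊆ D := convex_iff_pointwise_add_subset.1 hDc ht1'.le ht0.le (sub_add_cancel _ _)

lemma kobDist_le_mul_log_of_convex [CompleteSpace E] (hD : IsOpen D) (hDc : Convex ℝ D)
    {δ s : ℝ} (hδ : 0 < δ) (hs : 0 < s) (hz : ball z δ ⊆ D) (ho : ball o (δ + s) ⊆ D) :
    kobDist D z o ≤ ‖o - z‖ / s * Real.log ((δ + s) / δ) := by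
  have hseg := isACCurve_segment
    (hDc.segment_subset (hz (mem_ball_self hδ)) (ho (mem_ball_self (by positivity))))
  have hpos : ∀ t ∈ Icc (0 : ℝ) 1, 0 < δ + t * s := fun t ht ↦ by have := ht.1; positivity
  have hF : ∀ t ∈ Icc (0 : ℝ) 1, HasDerivAt (fun t ↦ ‖o - z‖ / s * Real.log (δ + t * s))
      (‖o - z‖ / (δ + t * s)) t := fun t ht ↦ by
    have hlin : HasDerivAt (fun t : ℝ ↦ δ + t * s) s t := by
      simpa using ((hasDerivAt_id t).mul_const s).const_add δ
    refine ((hlin.log (hpos t ht).ne').const_mul (‖o - z‖ / s)).congr_deriv ?_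
    rw [← mul_div_assoc, div_mul_cancel₀ _ hs.ne']
  have hball : ∀ t ∈ Icc (0 : ℝ) 1, ball (z + t • (o - z)) (δ + t * s) ⊆ D := fun t ht ↦ by
    convert ball_subset_of_convex hDc hδ (add_pos hδ hs) hz ho ht using 2
    · module
    · ring
  have hle := hseg.kobDist_le_sub hD hF fun t ht ↦
    kobMetric_le_norm_div (hpos t ht) (hball t ht) _
  rw [Real.log_div (add_pos hδ hs).ne' hδ.ne', mul_sub]
  simpa using hle

lemma exists_kobDist_le_add_mul_posLog [CompleteSpace E] [Nontrivial E] (hD : IsOpen D)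
    (hDc : Convex ℝ D) (hDb : Bornology.IsBounded D) (ho : o ∈ D) :
    ∃ A B : ℝ, 0 < B ∧ ∀ z ∈ D, kobDist D z o ≤ A + B * Real.posLog (bdist D z)⁻¹ := by
  obtain ⟨ε, hε, hball⟩ := Metric.isOpen_iff.1 hD o ho
  obtain ⟨R, hR0, hR⟩ := hDb.subset_closedBall_lt 0 o
  have hε2 : 0 < ε / 2 := half_pos hε
  refine ⟨R / (ε / 2) * (Real.posLog ε + Real.posLog (ε / 2)⁻¹), R / (ε / 2),
    by positivity, fun z hz ↦ ?_⟩
  have hδ : 0 < min (bdist D z) (ε / 2) := lt_min (bdist_pos hD hDb hz) hε2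
  set δ := min (bdist D z) (ε / 2) with hδdef
  have hδε : δ + ε / 2 ≤ ε := by linarith [min_le_right (bdist D z) (ε / 2)]
  have hnorm : ‖o - z‖ ≤ R := by
    simpa [dist_eq_norm, norm_sub_rev] using hR hz
  have hlogδ : Real.posLog δ⁻¹ ≤ Real.posLog (ε / 2)⁻¹ + Real.posLog (bdist D z)⁻¹ := by
    have h1 := Real.posLog_nonneg (x := (ε / 2)⁻¹)
    have h2 := Real.posLog_nonneg (x := (bdist D z)⁻¹)
    rcases min_choice (bdist D z) (ε / 2) with h | h <;> rw [hδdef, h] <;> linarith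
  have hlog : Real.log ((δ + ε / 2) / δ) ≤
      Real.posLog ε + (Real.posLog (ε / 2)⁻¹ + Real.posLog (bdist D z)⁻¹) :=
    calc Real.log ((δ + ε / 2) / δ) ≤ Real.posLog ((δ + ε / 2) / δ) := le_max_right _ _
      _ ≤ Real.posLog (ε * δ⁻¹) := by
        rw [← div_eq_mul_inv]
        exact Real.posLog_le_posLog (by positivity) (by gcongr)
      _ ≤ Real.posLog ε + Real.posLog δ⁻¹ := Real.posLog_mul
      _ ≤ _ := by gcongr
  have hlog0 : 0 ≤ Real.log ((δ + ε / 2) / δ) :=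
    Real.log_nonneg ((one_le_div hδ).2 (by linarith))
  calc kobDist D z o ≤ ‖o - z‖ / (ε / 2) * Real.log ((δ + ε / 2) / δ) :=
        kobDist_le_mul_log_of_convex hD hDc hδ hε2
          ((ball_subset_ball (min_le_left _ _)).trans (ball_bdist_subset hz))
          ((ball_subset_ball hδε).trans hball)
    _ ≤ R / (ε / 2) *
          (Real.posLog ε + (Real.posLog (ε / 2)⁻¹ + Real.posLog (bdist D z)⁻¹)) := by gcongr
    _ = _ := by ring

end Comparison

section Visibility

variable {E : Type*} [NormedAddCommGroup E] [NormedSpace ℂ E] {D G G' S S' : Set E} {σ g : ℝ → E}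
  {L : E → ℝ} {o z : E} {a b m r x A B C κ ν : ℝ}

lemma IsNearGeodesic.comp_neg (h : IsNearGeodesic D κ σ g a b) :
    IsNearGeodesic D κ (fun t ↦ σ (-t)) (fun t ↦ -g (-t)) (-b) (-a) where
  toIsACCurve := h.toIsACCurve.comp_neg
  kobLength_le := by
    rw [kobLength_comp_neg, kobDist_comm, neg_neg, neg_neg]
    exact h.kobLength_le

lemma IsNearGeodesic.exists_abs_kobLength_le [CompleteSpace E] (hD : IsOpen D)
    (hDc : IsPreconnected D) (h : IsNearGeodesic D κ σ g a b) (hκ : 0 < κ) (ho : o ∈ D) :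
    ∃ t₀ ∈ Icc a b, ∀ t ∈ Icc a b,
      |kobLength D σ g t₀ t| ≤ 2 * kobDist D (σ t) o + 2 * κ := by
  set T : Set ℝ := (fun t ↦ kobDist D (σ t) o) '' Icc a b
  have hTne : T.Nonempty := (nonempty_Icc.2 h.le).image _
  have hTbdd : BddBelow T := ⟨0, forall_mem_image.2 fun t _ ↦ kobDist_nonneg D (σ t) o⟩
  obtain ⟨_, ⟨t₀, ht₀, rfl⟩, hlt⟩ := exists_lt_of_csInf_lt hTne (lt_add_of_pos_right _ hκ)
  refine ⟨t₀, ht₀, fun t ht ↦ ?_⟩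
  have hmin : kobDist D (σ t₀) o < kobDist D (σ t) o + κ :=
    hlt.trans_le (add_le_add_left (csInf_le hTbdd (mem_image_of_mem _ ht)) κ)
  have htri : kobDist D (σ t₀) (σ t) ≤ kobDist D (σ t₀) o + kobDist D (σ t) o := by
    rw [kobDist_comm D (σ t) o]
    exact kobDist_triangle hD hDc (h.mapsTo ht₀) ho (h.mapsTo ht)
  rcases le_total t₀ t with hle | hle
  · rw [abs_of_nonneg (kobLength_nonneg D σ g hle)]
    linarith [(h.restrict hD hDc ht₀.1 hle ht.2).kobLength_le]
  · rw [kobLength, intervalIntegral.integral_symm, ← kobLength, abs_neg,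
      abs_of_nonneg (kobLength_nonneg D σ g hle)]
    rw [kobDist_comm] at htri
    linarith [(h.restrict hD hDc ht.1 hle ht₀.2).kobLength_le]

/-- On `G`, the Kobayashi distance of `D` to `o` grows at most linearly in the gauge `L`, while the
Kobayashi metric grows at least like `L ^ (1 + ν)`. For a log-type convex domain the gauge is the
positive part of `-log δ_D`. -/
structure HasLogTypeBounds (D G : Set E) (o : E) (L : E → ℝ) (A B C ν : ℝ) : Prop where
  B_pos : 0 < B
  C_nonneg : 0 ≤ C
  ν_pos : 0 < ν
  kobDist_le : ∀ z ∈ G, kobDist D z o ≤ A + B * L z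
  norm_mul_rpow_le : ∀ z ∈ G, ∀ v, ‖v‖ * L z ^ (1 + ν) ≤ C * kobMetric D z v

namespace HasLogTypeBounds

lemma norm_le (h : HasLogTypeBounds D G o L A B C ν) (hz : z ∈ G) (hx : 0 < x)
    (hxL : x ≤ 4 * B * L z) (v : E) :
    ‖v‖ ≤ C * (4 * B) ^ (1 + ν) * (x ^ (-(1 + ν)) * kobMetric D z v) := by
  have hB := h.B_pos
  have hν := h.ν_pos
  have hL : 0 < L z := pos_of_mul_pos_right (hx.trans_le hxL) (by positivity)
  have hxpow : x ^ (1 + ν) ≤ (4 * B) ^ (1 + ν) * L z ^ (1 + ν) := by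
    rw [← Real.mul_rpow (by positivity) hL.le]
    gcongr
  rw [Real.rpow_neg hx.le, mul_left_comm, ← div_eq_inv_mul, le_div_iff₀ (by positivity)]
  calc ‖v‖ * x ^ (1 + ν) ≤ ‖v‖ * ((4 * B) ^ (1 + ν) * L z ^ (1 + ν)) := by gcongr
    _ = (4 * B) ^ (1 + ν) * (‖v‖ * L z ^ (1 + ν)) := by ring
    _ ≤ (4 * B) ^ (1 + ν) * (C * kobMetric D z v) :=
      mul_le_mul_of_nonneg_left (h.norm_mul_rpow_le z hz v) (by positivity)
    _ = C * (4 * B) ^ (1 + ν) * kobMetric D z v := by ring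

lemma norm_sub_le [CompleteSpace E] (hD : IsOpen D) (hDc : IsPreconnected D)
    (h : HasLogTypeBounds D G o L A B C ν) (ho : o ∈ D) (hκ : 0 < κ)
    (hσ : IsNearGeodesic D κ σ g a b) (hσG : MapsTo σ (Icc a b) G) (hm : 0 < m)
    (hAm : 2 * A + 2 * κ ≤ m) (hmL : ∀ t ∈ Icc a b, m ≤ B * L (σ t)) :
    ‖σ b - σ a‖ ≤ C * (4 * B) ^ (1 + ν) * (2 * (m ^ (-ν) / ν)) := by
  have hB := h.B_pos
  have hC := h.C_nonneg
  obtain ⟨t₀, ht₀, hbase⟩ := hσ.exists_abs_kobLength_le hD hDc hκ ho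
  have hg : ∀ t ∈ Icc a b, ‖g t‖ ≤ C * (4 * B) ^ (1 + ν) *
      ((|kobLength D σ g t₀ t| + m) ^ (-(1 + ν)) * kobMetric D (σ t) (g t)) := fun t ht ↦
    h.norm_le (hσG ht) (by positivity)
      (by linarith [hbase t ht, hmL t ht, h.kobDist_le _ (hσG ht)]) _
  have hk := hσ.intervalIntegrable_kobMetric hD
  have ht₀' : t₀ ∈ uIcc a b := Icc_subset_uIcc ht₀
  have hcont : Continuous fun u : ℝ ↦ (|u| + m) ^ (-(1 + ν)) :=
    (by fun_prop : Continuous fun u : ℝ ↦ |u| + m).rpow_const fun u ↦ .inl (by positivity)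
  have heq : σ b - σ a = ∫ t in a..b, g t := by
    rw [hσ.eq_add_integral (left_mem_Icc.2 hσ.le) (right_mem_Icc.2 hσ.le), add_sub_cancel_left]
  rw [heq]
  refine (intervalIntegral.norm_integral_le_of_norm_le hσ.le
    (.of_forall fun t ht ↦ hg t (Ioc_subset_Icc_self ht))
    ((intervalIntegrable_comp_primitive_mul hcont hk ht₀').const_mul _)).trans ?_
  rw [intervalIntegral.integral_const_mul]
  gcongr
  exact integral_abs_primitive_add_rpow_mul_le hk ht₀' hm h.ν_pos

end HasLogTypeBounds

/-- Visibility of `S`: a `κ`-near-geodesic of `D` which stays in `G` and moves its initial point by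
at least `r` has to meet `S`. -/
def NearGeodesicsMeet (D G : Set E) (κ r : ℝ) (S : Set E) : Prop :=
  ∀ ⦃σ g : ℝ → E⦄ ⦃a b : ℝ⦄, IsNearGeodesic D κ σ g a b → MapsTo σ (Icc a b) G →
    r ≤ ‖σ b - σ a‖ → ∃ t ∈ Icc a b, σ t ∈ S

lemma NearGeodesicsMeet.mono (h : NearGeodesicsMeet D G κ r S) (hG : G' ⊆ G)
    (hS : G' ∩ S ⊆ S') : NearGeodesicsMeet D G' κ r S' := fun _ _ _ _ hσ hσG hr ↦
  let ⟨t, ht, htS⟩ := h hσ (hσG.mono_right hG) hr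
  ⟨t, ht, hS ⟨hσG ht, htS⟩⟩

lemma HasLogTypeBounds.exists_nearGeodesicsMeet [CompleteSpace E] (hD : IsOpen D)
    (hDc : IsPreconnected D) (h : HasLogTypeBounds D G o L A B C ν) (ho : o ∈ D) (hκ : 0 < κ)
    (hr : 0 < r) : ∃ M, NearGeodesicsMeet D G κ r {z | L z ≤ M} := by
  have hlim : Tendsto (fun m : ℝ ↦ C * (4 * B) ^ (1 + ν) * (2 * (m ^ (-ν) / ν))) atTop (𝓝 0) := by
    simpa using
      (((tendsto_rpow_neg_atTop h.ν_pos).div_const ν).const_mul 2).const_mul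
        (C * (4 * B) ^ (1 + ν))
  obtain ⟨m, hmr, hAm, hm⟩ := ((hlim.eventually_lt_const hr).and
    ((eventually_ge_atTop (2 * A + 2 * κ)).and (eventually_gt_atTop 0))).exists
  refine ⟨m / B, fun σ g a b hσ hσG hrσ ↦ ?_⟩
  by_contra! hL
  refine (hmr.trans_le hrσ).not_ge (h.norm_sub_le hD hDc ho hκ hσ hσG hm hAm fun t ht ↦ ?_)
  rw [← div_le_iff₀' h.B_pos]
  exact (not_le.1 (hL t ht)).le

end Visibility

section Core

variable {X : Type*} [PseudoMetricSpace X] {Ω U : Set X} {x y : X} {r s : ℝ}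

/-- The points of `Ω` that lie `r`-deep inside `U`. -/
def core (Ω U : Set X) (r : ℝ) : Set X := {x ∈ Ω | ball x r ⊆ U}

lemma core_subset_inter (hr : 0 < r) : core Ω U r ⊆ Ω ∩ U := fun _ hx ↦
  ⟨hx.1, hx.2 (mem_ball_self hr)⟩

lemma core_anti (hrs : r ≤ s) : core Ω U s ⊆ core Ω U r := fun _ hx ↦
  ⟨hx.1, (ball_subset_ball hrs).trans hx.2⟩

lemma mem_core_of_dist_le (hx : x ∈ core Ω U (s + r)) (hy : y ∈ Ω) (hyx : dist y x ≤ r) :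
    y ∈ core Ω U s :=
  ⟨hy, (ball_subset_ball' (by gcongr)).trans hx.2⟩

end Core

section Localization

lemma exists_eq_and_forall_le_of_continuousOn {φ : ℝ → ℝ} {a b r : ℝ} (hab : a ≤ b)
    (hφ : ContinuousOn φ (Icc a b)) (ha : φ a ≤ r) (hb : r ≤ φ b) :
    ∃ τ ∈ Icc a b, φ τ = r ∧ ∀ t ∈ Icc a τ, φ t ≤ r := by
  have hclosed : IsClosed (Icc a b ∩ φ ⁻¹' Ici r) :=
    hφ.preimage_isClosed_of_isClosed isClosed_Icc isClosed_Ici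
  obtain ⟨τ, ⟨hτ, hrτ⟩, hmin⟩ := (isCompact_Icc.of_isClosed_subset hclosed
    inter_subset_left).exists_isLeast ⟨b, right_mem_Icc.2 hab, hb⟩
  obtain ⟨t, ht, htr⟩ := intermediate_value_Icc hτ.1
    (hφ.mono (Icc_subset_Icc_right hτ.2)) ⟨ha, hrτ⟩
  obtain rfl : t = τ := ht.2.antisymm (hmin ⟨⟨ht.1, ht.2.trans hτ.2⟩, htr.ge⟩)
  refine ⟨t, hτ, htr, fun s hs ↦ ?_⟩
  rcases hs.2.eq_or_lt with rfl | hlt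
  · exact htr.le
  · exact (not_le.1 fun hle ↦ hlt.not_ge (hmin ⟨⟨hs.1, hs.2.trans hτ.2⟩, hle⟩)).le

variable {E : Type*} [NormedAddCommGroup E] [NormedSpace ℂ E] {D Ω U S : Set E} {σ g : ℝ → E}
  {o y z : E} {a b c r s C P Q δ κ : ℝ}

lemma IsNearGeodesic.exists_mem_of_right_notMem_core [CompleteSpace E] (hΩ : IsOpen Ω)
    (hΩc : IsPreconnected Ω) (h : IsNearGeodesic Ω κ σ g a b) (hr : 0 ≤ r)
    (hvis : NearGeodesicsMeet Ω (core Ω U s) κ r S) (ha : σ a ∈ core Ω U (s + r))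
    (hb : σ b ∉ core Ω U s) :
    ∃ t ∈ Icc a b, σ t ∈ S ∧ MapsTo σ (Icc a t) (core Ω U s) := by
  have hfar : r ≤ ‖σ b - σ a‖ := by
    rw [← dist_eq_norm]
    exact (not_le.1 fun hle ↦ hb (mem_core_of_dist_le ha h.right_mem hle)).le
  obtain ⟨τ, hτ, hτr, hle⟩ := exists_eq_and_forall_le_of_continuousOn
    (φ := fun t ↦ ‖σ t - σ a‖) h.le
    (h.continuousOn.sub continuousOn_const).norm (by simpa) hfar
  have hcore : MapsTo σ (Icc a τ) (core Ω U s) := fun t ht ↦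
    mem_core_of_dist_le ha (h.mapsTo ⟨ht.1, ht.2.trans hτ.2⟩)
      (dist_eq_norm (σ t) (σ a) ▸ hle t ht)
  obtain ⟨t, ht, htS⟩ := hvis (h.restrict hΩ hΩc le_rfl hτ.1 hτ.2) hcore hτr.ge
  exact ⟨t, ⟨ht.1, ht.2.trans hτ.2⟩, htS, hcore.mono_left (Icc_subset_Icc_right ht.2)⟩

lemma IsNearGeodesic.exists_mem_of_left_notMem_core [CompleteSpace E] (hΩ : IsOpen Ω)
    (hΩc : IsPreconnected Ω) (h : IsNearGeodesic Ω κ σ g a b) (hr : 0 ≤ r)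
    (hvis : NearGeodesicsMeet Ω (core Ω U s) κ r S) (ha : σ a ∉ core Ω U s)
    (hb : σ b ∈ core Ω U (s + r)) :
    ∃ t ∈ Icc a b, σ t ∈ S ∧ MapsTo σ (Icc t b) (core Ω U s) := by
  obtain ⟨t, ht, htS, hcore⟩ := h.comp_neg.exists_mem_of_right_notMem_core hΩ hΩc hr hvis
    (by simpa) (by simpa)
  refine ⟨-t, ⟨le_neg.1 ht.2, neg_le.1 ht.1⟩, htS, fun u hu ↦ ?_⟩
  simpa using hcore (x := -u) ⟨neg_le_neg hu.2, neg_le.1 hu.1⟩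

lemma sub_le_kobDist_of_notMem_core [CompleteSpace E] (hΩ : IsOpen Ω) (hΩc : IsPreconnected Ω)
    (ho : o ∈ Ω) (hκ : 0 < κ) (hr : 0 ≤ r)
    (hvis : NearGeodesicsMeet Ω (core Ω U s) κ r {w | kobDist Ω w o ≤ P})
    (hz : z ∈ core Ω U (s + r)) (hy : y ∈ Ω) (hyU : y ∉ core Ω U s) :
    kobDist Ω z o - κ - P ≤ kobDist Ω z y := by
  obtain ⟨σ, g, a, b, h, rfl, rfl⟩ := exists_isNearGeodesic hΩ hΩc hz.1 hy hκ
  obtain ⟨t, ht, htP : kobDist Ω (σ t) o ≤ P, -⟩ :=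
    h.exists_mem_of_right_notMem_core hΩ hΩc hr hvis hz hyU
  have hat := h.toIsACCurve.restrict le_rfl ht.1 ht.2
  have hadd := hat.kobLength_add hΩ (h.toIsACCurve.restrict ht.1 ht.2 le_rfl)
  linarith [hat.kobDist_le, kobLength_nonneg Ω σ g ht.2, h.kobLength_le,
    kobDist_triangle hΩ hΩc hz.1 hat.right_mem ho]

lemma kobMetric_inter_le_of_le_kobDist [CompleteSpace E] (hΩ : IsOpen Ω) (hz : z ∈ Ω)
    (hδ : 0 < δ) (h : ∀ y ∈ Ω, y ∉ U → δ ≤ kobDist Ω z y) (v : E) :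
    kobMetric (Ω ∩ U) z v ≤ (1 - Real.exp (-δ))⁻¹ * kobMetric Ω z v := by
  have hexp : 0 < Real.exp (-δ) := Real.exp_pos _
  have hexp1 : Real.exp (-δ) < 1 := by simpa
  refine kobMetric_le_inv_mul hΩ hz (by linarith) (by linarith) (fun f hf w hw ↦ ?_) v
  have hw1 : ‖w‖ < 1 := by linarith
  have hfw : f w ∈ Ω := hf.mapsTo (mem_ball_zero_iff.2 hw1)
  refine ⟨hfw, by_contra fun hU ↦ ?_⟩
  have hlog : -δ < Real.log (1 - ‖w‖) :=
    (Real.lt_log_iff_exp_lt (by linarith)).2 (by linarith)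
  linarith [h _ hfw hU, hf.kobDist_le hΩ hw1]

lemma kobMetric_inter_le_add_exp [CompleteSpace E] (hΩ : IsOpen Ω) (hz : z ∈ Ω)
    (h : ∀ y ∈ Ω, y ∉ U → δ ≤ kobDist Ω z y) (hc : 1 ≤ c) {v : E}
    (hrough : kobMetric (Ω ∩ U) z v ≤ c * kobMetric Ω z v) :
    kobMetric (Ω ∩ U) z v ≤ (1 + 2 * c * Real.exp (-δ)) * kobMetric Ω z v := by
  have hexp : 0 < Real.exp (-δ) := Real.exp_pos _
  have hk := kobMetric_nonneg Ω z v
  rcases le_or_gt (Real.exp (-δ)) (1 / 2) with hle | hgt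
  · have hδ : 0 < δ := by simpa using hle.trans_lt one_half_lt_one
    refine (kobMetric_inter_le_of_le_kobDist hΩ hz hδ h v).trans
      (mul_le_mul_of_nonneg_right ?_ hk)
    rw [inv_le_iff_one_le_mul₀ (by linarith)]
    calc 1 ≤ (1 + 2 * 1 * Real.exp (-δ)) * (1 - Real.exp (-δ)) := by nlinarith
      _ ≤ (1 + 2 * c * Real.exp (-δ)) * (1 - Real.exp (-δ)) := by gcongr; linarith
  · exact hrough.trans (mul_le_mul_of_nonneg_right (by nlinarith) hk)

lemma exists_kobMetric_inter_le_mul (hΩ : IsOpen Ω) (hΩb : Bornology.IsBounded Ω) (hr : 0 < r) :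
    ∃ c, 1 ≤ c ∧ ∀ z ∈ core Ω U r, ∀ v, kobMetric (Ω ∩ U) z v ≤ c * kobMetric Ω z v := by
  obtain ⟨R, hR, hdiam⟩ : ∃ R, 0 < R ∧ ∀ x ∈ Ω, ∀ y ∈ Ω, dist x y ≤ R :=
    ⟨diam Ω + 1, by positivity, fun x hx y hy ↦
      (dist_le_diam_of_mem hΩb hx hy).trans (le_add_of_nonneg_right zero_le_one)⟩
  have hs : 0 < min 1 (r / R) := by positivity
  refine ⟨(min 1 (r / R))⁻¹, (one_le_inv₀ hs).2 (min_le_left _ _), fun z hz v ↦ ?_⟩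
  refine kobMetric_le_inv_mul hΩ hz.1 hs (min_le_left _ _) (fun f hf w hw ↦ ?_) v
  have hw1 : w ∈ ball (0 : ℂ) 1 := mem_ball_zero_iff.2 (hw.trans_le (min_le_left _ _))
  refine ⟨hf.mapsTo hw1, hz.2 ?_⟩
  have hschwarz := Complex.dist_le_div_mul_dist_of_mapsTo_ball hf.differentiableOn
    (fun ζ hζ ↦ hdiam _ (hf.mapsTo hζ) _ (hf.mapsTo (mem_ball_self one_pos))) hw1
  rw [hf.map_zero, div_one, dist_zero_right] at hschwarz
  exact hschwarz.trans_lt ((lt_div_iff₀' hR).1 (hw.trans_le (min_le_right _ _)))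

lemma exists_kobMetric_inter_le_add_exp_kobDist [CompleteSpace E] (hΩ : IsOpen Ω)
    (hΩc : IsPreconnected Ω) (hΩb : Bornology.IsBounded Ω) (ho : o ∈ Ω) (hκ : 0 < κ) (hr : 0 ≤ r)
    (hs : 0 < s) (hvis : NearGeodesicsMeet Ω (core Ω U s) κ r {w | kobDist Ω w o ≤ P}) :
    ∃ C, 0 ≤ C ∧ ∀ z ∈ core Ω U (s + r), ∀ v,
      kobMetric (Ω ∩ U) z v ≤ (1 + C * Real.exp (-kobDist Ω z o)) * kobMetric Ω z v := by
  obtain ⟨c, hc, hrough⟩ := exists_kobMetric_inter_le_mul (U := U) hΩ hΩb hs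
  refine ⟨2 * c * Real.exp (κ + P), by positivity, fun z hz v ↦ ?_⟩
  have hfar : ∀ y ∈ Ω, y ∉ U → kobDist Ω z o - κ - P ≤ kobDist Ω z y := fun y hy hyU ↦
    sub_le_kobDist_of_notMem_core hΩ hΩc ho hκ hr hvis hz hy
      fun hcore ↦ hyU (core_subset_inter hs hcore).2
  have hexp : Real.exp (-(kobDist Ω z o - κ - P)) =
      Real.exp (κ + P) * Real.exp (-kobDist Ω z o) := by
    rw [← Real.exp_add]
    ring_nf
  rw [mul_assoc (2 * c), ← hexp]
  exact kobMetric_inter_le_add_exp hΩ hz.1 hfar hc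
    (hrough z (core_anti (le_add_of_nonneg_right hr) hz) v)

lemma IsNearGeodesic.kobDist_le_kobLength_add [CompleteSpace E] (hΩ : IsOpen Ω)
    (hΩc : IsPreconnected Ω) (hD : IsOpen D) (h : IsNearGeodesic Ω κ σ g a b) (hκ : 0 < κ)
    (ho : o ∈ Ω) (hC : 0 ≤ C) (hσD : MapsTo σ (Icc a b) D)
    (hle : ∀ t ∈ Icc a b, ∀ v,
      kobMetric D (σ t) v ≤ (1 + C * Real.exp (-kobDist Ω (σ t) o)) * kobMetric Ω (σ t) v) :
    kobDist D (σ a) (σ b) ≤ kobLength Ω σ g a b + C * Real.exp κ * 4 := by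
  obtain ⟨t₀, ht₀, hbase⟩ := h.exists_abs_kobLength_le hΩ hΩc hκ ho
  have hpt : ∀ t ∈ Icc a b, kobMetric D (σ t) (g t) ≤ kobMetric Ω (σ t) (g t) +
      C * Real.exp κ * (Real.exp (-(|kobLength Ω σ g t₀ t| / 2)) * kobMetric Ω (σ t) (g t)) := by
    intro t ht
    have hk := kobMetric_nonneg Ω (σ t) (g t)
    have hexp : Real.exp (-kobDist Ω (σ t) o) ≤
        Real.exp κ * Real.exp (-(|kobLength Ω σ g t₀ t| / 2)) := by
      rw [← Real.exp_add, Real.exp_le_exp]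
      linarith [hbase t ht]
    calc _ ≤ (1 + C * Real.exp (-kobDist Ω (σ t) o)) * kobMetric Ω (σ t) (g t) := hle t ht _
      _ ≤ (1 + C * (Real.exp κ * Real.exp (-(|kobLength Ω σ g t₀ t| / 2)))) *
          kobMetric Ω (σ t) (g t) := by gcongr
      _ = _ := by ring
  have hk := h.intervalIntegrable_kobMetric hΩ
  have ht₀' : t₀ ∈ uIcc a b := Icc_subset_uIcc ht₀
  have herr := (intervalIntegrable_comp_primitive_mul
    (by fun_prop : Continuous fun u : ℝ ↦ Real.exp (-(|u| / 2))) hk ht₀').const_mul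
      (C * Real.exp κ)
  have hσ : IsACCurve D σ g a b := h.toIsACCurve.of_mapsTo hσD
  refine (hσ.kobDist_le.trans (intervalIntegral.integral_mono_on h.le
    (hσ.intervalIntegrable_kobMetric hD) (hk.add herr) hpt)).trans ?_
  rw [intervalIntegral.integral_add hk herr, intervalIntegral.integral_const_mul, ← kobLength]
  gcongr
  exact integral_exp_neg_abs_primitive_mul_le hk ht₀'

lemma IsNearGeodesic.kobDist_inter_le_kobLength_add [CompleteSpace E] (hΩ : IsOpen Ω)
    (hΩc : IsPreconnected Ω) (hD : IsOpen D) (hDc : IsPreconnected D)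
    (h : IsNearGeodesic Ω κ σ g a b) (ho : o ∈ D) (hr : 0 ≤ r) (hcore : core Ω U s ⊆ D)
    (hvis : NearGeodesicsMeet Ω (core Ω U s) κ r {w | kobDist D w o ≤ P}) (hP : 0 ≤ P)
    (hcmp : ∀ ⦃σ g a b⦄, IsNearGeodesic Ω κ σ g a b → MapsTo σ (Icc a b) (core Ω U s) →
      kobDist D (σ a) (σ b) ≤ kobLength Ω σ g a b + Q) (hQ : 0 ≤ Q)
    (ha : σ a ∈ core Ω U (s + r)) (hb : σ b ∈ core Ω U (s + r)) :
    kobDist D (σ a) (σ b) ≤ kobLength Ω σ g a b + 2 * Q + 2 * P := by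
  by_cases hσ : MapsTo σ (Icc a b) (core Ω U s)
  · linarith [hcmp h hσ]
  obtain ⟨t, ht, hout⟩ : ∃ t ∈ Icc a b, σ t ∉ core Ω U s := by
    simpa only [MapsTo, not_forall, exists_prop] using hσ
  obtain ⟨t₁, ht₁, ht₁P : kobDist D (σ t₁) o ≤ P, hcore₁⟩ :=
    (h.restrict hΩ hΩc le_rfl ht.1 ht.2).exists_mem_of_right_notMem_core hΩ hΩc hr hvis ha hout
  obtain ⟨t₂, ht₂, ht₂P : kobDist D (σ t₂) o ≤ P, hcore₂⟩ :=
    (h.restrict hΩ hΩc ht.1 ht.2 le_rfl).exists_mem_of_left_notMem_core hΩ hΩc hr hvis hout hb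
  rw [kobDist_comm] at ht₂P
  have h₁₂ : t₁ ≤ t₂ := ht₁.2.trans ht₂.1
  have h₁ := h.restrict hΩ hΩc le_rfl ht₁.1 (h₁₂.trans ht₂.2)
  have h₂ := h.restrict hΩ hΩc (ht₁.1.trans h₁₂) ht₂.2 le_rfl
  have hmid := h.toIsACCurve.restrict ht₁.1 h₁₂ ht₂.2
  have hlen : kobLength Ω σ g a t₁ + kobLength Ω σ g t₂ b ≤ kobLength Ω σ g a b := by
    have hadd := (h₁.toIsACCurve.trans hmid).kobLength_add hΩ h₂.toIsACCurve
    rw [← h₁.toIsACCurve.kobLength_add hΩ hmid] at hadd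
    linarith [kobLength_nonneg Ω σ g h₁₂]
  have hσ₁ := hcore (hcore₁ (right_mem_Icc.2 ht₁.1))
  have hσ₂ := hcore (hcore₂ (left_mem_Icc.2 ht₂.2))
  have hσa := hcore (hcore₁ (left_mem_Icc.2 ht₁.1))
  have hσb := hcore (hcore₂ (right_mem_Icc.2 ht₂.2))
  linarith [hcmp h₁ hcore₁, hcmp h₂ hcore₂, kobDist_triangle hD hDc hσa hσ₁ hσb,
    kobDist_triangle hD hDc hσ₁ ho hσb, kobDist_triangle hD hDc ho hσ₂ hσb]

end Localization

section LogType

variable {E : Type*} [NormedAddCommGroup E] [NormedSpace ℂ E] {D Ω U : Set E} {o z : E}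
  {r s C κ ν : ℝ}

lemma posLog_inv_le_abs_log (x : ℝ) : Real.posLog x⁻¹ ≤ |Real.log x| :=
  max_le (abs_nonneg _) ((Real.log_inv x).trans_le (neg_le_abs _))

lemma LogTypeConvexWith.norm_mul_posLog_rpow_le (h : LogTypeConvexWith D C ν) (hz : z ∈ D)
    (v : E) : ‖v‖ * Real.posLog (bdist D z)⁻¹ ^ (1 + ν) ≤ 4 * C * kobMetric D z v := by
  obtain ⟨hD, -, hDb, hDc, hC, hν, hdir⟩ := h
  have hk := kobMetric_nonneg D z v
  rcases eq_or_ne v 0 with rfl | hv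
  · rw [norm_zero, zero_mul]
    positivity
  have hdir0 : 0 ≤ bdistDir D z v := infDist_nonneg
  have hlog : bdistDir D z v * Real.posLog (bdist D z)⁻¹ ^ (1 + ν) ≤ C :=
    calc _ ≤ bdistDir D z v * |Real.log (bdist D z)| ^ (1 + ν) := by
          gcongr
          · exact Real.posLog_nonneg
          · exact posLog_inv_le_abs_log _
      _ ≤ C := mul_le_of_le_div₀ hC.le (by positivity) (hdir z hz v hv)
  calc _ ≤ 4 * bdistDir D z v * kobMetric D z v * Real.posLog (bdist D z)⁻¹ ^ (1 + ν) :=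
        mul_le_mul_of_nonneg_right (norm_le_four_mul_bdistDir_mul_kobMetric hD hDc hDb hz v)
          (Real.rpow_nonneg Real.posLog_nonneg _)
    _ = 4 * (bdistDir D z v * Real.posLog (bdist D z)⁻¹ ^ (1 + ν)) * kobMetric D z v := by ring
    _ ≤ 4 * C * kobMetric D z v := by gcongr

lemma LogTypeConvex.exists_nearGeodesicsMeet [CompleteSpace E] [Nontrivial E] (hΩ : IsOpen Ω)
    (hΩc : IsPreconnected Ω) (hΩb : Bornology.IsBounded Ω) (h : LogTypeConvex (Ω ∩ U))
    (ho : o ∈ Ω ∩ U) (hκ : 0 < κ) (hr : 0 < r) (hs : 0 < s) :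
    ∃ P, 0 ≤ P ∧ NearGeodesicsMeet Ω (core Ω U s) κ r {z | kobDist (Ω ∩ U) z o ≤ P} := by
  obtain ⟨C, ν, h⟩ := h
  have ⟨hD, _, hDb, hDc, hC, hν, _⟩ := h
  obtain ⟨A, B, hB, hdist⟩ := exists_kobDist_le_add_mul_posLog hD hDc hDb ho
  obtain ⟨c, hc, hrough⟩ := exists_kobMetric_inter_le_mul (U := U) hΩ hΩb hs
  have hbounds : HasLogTypeBounds Ω (core Ω U s) o
      (fun z ↦ Real.posLog (bdist (Ω ∩ U) z)⁻¹) A B (4 * C * c) ν := by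
    refine ⟨hB, by positivity, hν, fun z hz ↦ ?_, fun z hz v ↦ ?_⟩
    · have hzD := core_subset_inter hs hz
      exact (kobDist_anti hD hDc.isPreconnected hΩ inter_subset_left hzD ho).trans (hdist z hzD)
    · refine (h.norm_mul_posLog_rpow_le (core_subset_inter hs hz) v).trans ?_
      rw [mul_assoc (4 * C)]
      exact mul_le_mul_of_nonneg_left (hrough z hz v) (by positivity)
  obtain ⟨M, hM⟩ := hbounds.exists_nearGeodesicsMeet hΩ hΩc ho.1 hκ hr
  refine ⟨max 0 (A + B * M), le_max_left _ _, hM.mono subset_rfl fun z ⟨hz, hzM⟩ ↦ ?_⟩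
  have hzM : Real.posLog (bdist (Ω ∩ U) z)⁻¹ ≤ M := hzM
  calc kobDist (Ω ∩ U) z o ≤ A + B * Real.posLog (bdist (Ω ∩ U) z)⁻¹ :=
        hdist z (core_subset_inter hs hz)
    _ ≤ A + B * M := by gcongr
    _ ≤ max 0 (A + B * M) := le_max_right _ _

lemma exists_thickening_inter_subset {X : Type*} [PseudoMetricSpace X] [ProperSpace X]
    {Ω U V : Set X} (hΩb : Bornology.IsBounded Ω) (hU : IsOpen U) (hV : closure V ⊆ U) :
    ∃ r, 0 < r ∧ thickening r (V ∩ Ω) ⊆ U := by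
  obtain ⟨r, hr, hsub⟩ := (hΩb.subset inter_subset_right).isCompact_closure
    |>.exists_thickening_subset_open hU ((closure_mono inter_subset_left).trans hV)
  exact ⟨r, hr, (thickening_subset_of_subset r subset_closure).trans hsub⟩

end LogType

theorem statement_0_general {E : Type*} [NormedAddCommGroup E] [NormedSpace ℂ E] [CompleteSpace E]
    [Nontrivial E] {Ω U W : Set E} {r : ℝ} (hΩo : IsOpen Ω) (hΩc : IsPreconnected Ω)
    (hΩb : Bornology.IsBounded Ω) (hlog : LogTypeConvex (Ω ∩ U)) (hWΩ : W ⊆ Ω) (hr : 0 < r)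
    (hWU : thickening r W ⊆ U) :
    ∃ K : ℝ, 0 < K ∧ ∀ p ∈ W, ∀ q ∈ W,
      kobDist Ω p q ≤ kobDist (Ω ∩ U) p q ∧ kobDist (Ω ∩ U) p q ≤ kobDist Ω p q + K := by
  have ⟨_, _, hD, ⟨o, ho⟩, _, hDc, _⟩ := hlog
  obtain ⟨s, hs, rfl⟩ : ∃ s, 0 < s ∧ r = s + s + s := ⟨r / 3, by positivity, by ring⟩
  have hW : W ⊆ core Ω U (s + s + s) := fun x hx ↦
    ⟨hWΩ hx, (ball_subset_thickening hx _).trans hWU⟩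
  have hmono : core Ω U (s + s) ⊆ core Ω U s := core_anti (by linarith)
  obtain ⟨P, hP, hvis⟩ := hlog.exists_nearGeodesicsMeet hΩo hΩc hΩb ho one_pos hs hs
  have hvisΩ := hvis.mono subset_rfl fun z ⟨hz, hzP⟩ ↦ show kobDist Ω z o ≤ P from
    (kobDist_anti hD hDc.isPreconnected hΩo inter_subset_left (core_subset_inter hs hz) ho).trans
      hzP
  obtain ⟨C, hC, hmetric⟩ :=
    exists_kobMetric_inter_le_add_exp_kobDist hΩo hΩc hΩb ho.1 one_pos hs.le hs hvisΩ
  refine ⟨1 + 2 * (C * Real.exp 1 * 4) + 2 * P, by positivity, fun p hp q hq ↦ ?_⟩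
  have hcore : core Ω U (s + s) ⊆ Ω ∩ U := core_subset_inter (by positivity)
  have hWD : W ⊆ Ω ∩ U := hW.trans (core_subset_inter (by positivity))
  refine ⟨kobDist_anti hD hDc.isPreconnected hΩo inter_subset_left (hWD hp) (hWD hq), ?_⟩
  obtain ⟨σ, g, a, b, h, rfl, rfl⟩ := exists_isNearGeodesic hΩo hΩc (hWΩ hp) (hWΩ hq) one_pos
  linarith [h.kobLength_le, h.kobDist_inter_le_kobLength_add hΩo hΩc hD hDc.isPreconnected ho hs.le
    hcore (hvis.mono hmono inter_subset_right) hP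
    (fun _ _ _ _ hσ hσc ↦ hσ.kobDist_le_kobLength_add hΩo hΩc hD one_pos ho.1 hC
      (hσc.mono_right hcore) fun t ht ↦ hmetric _ (hσc ht)) (by positivity) (hW hp) (hW hq)]

theorem statement_0 {n : ℕ} (hn : 2 ≤ n)
    (Ω U : Set (EuclideanSpace ℂ (Fin n)))
    (hΩo : IsOpen Ω) (hΩc : IsConnected Ω) (hΩb : Bornology.IsBounded Ω)
    (hUo : IsOpen U) (hUc : IsConnected U)
    (hfr : (U ∩ frontier Ω).Nonempty)
    (hlog : LogTypeConvex (Ω ∩ U))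
    (V : Set (EuclideanSpace ℂ (Fin n))) (hVo : IsOpen V) (hVU : V ⊆ U)
    (hclV : closure V ⊆ U) :
    ∃ K : ℝ, 0 < K ∧ ∀ p ∈ V ∩ Ω, ∀ q ∈ V ∩ Ω,
      kobDist Ω p q ≤ kobDist (Ω ∩ U) p q ∧
      kobDist (Ω ∩ U) p q ≤ kobDist Ω p q + K := by
  have : Nonempty (Fin n) := ⟨⟨0, by lia⟩⟩
  obtain ⟨r, hr, hU⟩ := exists_thickening_inter_subset hΩb hUo hclV
  exact statement_0_general hΩo hΩc.isPreconnected hΩb hlog inter_subset_right hr hU
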